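/- There exists a constant C > 0, depending only on Ω and η⁰, such that for every T > 0, every bounded measurable potential a, and every classical nonnegative solution q of the adjoint heat equation with Neumann boundary condition, one has (∫_Ω q(0,x)² dx)^{1/2} ≤ exp(C(1 + 1/T + T‖a‖_∞ + ‖a‖_∞^{1/2})) ∫_Ω q(T/4, x) dx. -/

import Mathlib

open MeasureTheory Real Set RealInnerProductSpace

noncomputable def spaceLaplacian {N : ℕ} (f : EuclideanSpace ℝ (Fin N) → ℝ)
    (x : EuclideanSpace ℝ (Fin N)) : ℝ :=
  ∑ i : Fin N, fderiv ℝ (fun y => fderiv ℝ f y (EuclideanSpace.single i 1)) x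
    (EuclideanSpace.single i 1)

/-!
Testing the equation with `1` and with `q` shows that the mass `F t = ∫ q(t)` and the energy
`G t = ∫ q(t)²` satisfy `F' ≥ -A F` and `G' ≥ 2 ∫ |∇q|² - 2 A G` with `A = ‖a‖_∞`. A Nash inequality
`∫ u² ≤ c (σ ∫ |∇u|² + (1 + σ⁻ⁿ) (∫ |u|)²)`, valid for all `σ > 0`, turns the second bound into a
differential inequality for `G` forced by `(exp (A T) F T)²`; choosing `σ` proportional to the
remaining time `T - t` bounds the derivative of `(T - t) ^ (n + 1) exp (2 A t) G t` from below, and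
hence `G 0` by the final mass. The theorem is this bound on the time interval `[0, T / 4]`.

The Nash inequality only needs that `Ω` has an interior cone at every boundary point, uniformly
nearby: `u` is compared with its averages over translates of a small ball along the cone. The
integrations by parts avoid any surface measure: fields are multiplied by the cutoffs
`1 - 1 / (1 + m η²)`, whose gradients contribute nothing in the limit `m → ∞` because the Neumann
condition makes the normal component `⟨∇q, ∇η⟩` of the flux `O(η)`.
-/

open Filter Topology Asymptotics Module Pointwise
open Metric (ball closedBall infDist)

namespace NeumannHeat

section Geometry

lemma isBigO_principal_of_forall_nhdsWithin {X F G : Type*} [TopologicalSpace X]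
    [SeminormedAddCommGroup F] [SeminormedAddCommGroup G] {f : X → F} {g : X → G} {Ω : Set X}
    (hΩ : IsCompact (closure Ω)) (h : ∀ y ∈ closure Ω, f =O[𝓝[Ω] y] g) : f =O[𝓟 Ω] g := by
  refine (hΩ.induction_on (p := fun S => f =O[𝓟 (S ∩ Ω)] g) (by simp) ?_ ?_ ?_).mono
    (principal_mono.mpr fun x hx => ⟨subset_closure hx, hx⟩)
  · exact fun S S' hSS' hS' => hS'.mono (principal_mono.mpr (inter_subset_inter_left Ω hSS'))
  · intro S S' hS hS'
    rw [union_inter_distrib_right, ← sup_principal]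
    exact hS.sup hS'
  · intro y hy
    obtain ⟨C, hC⟩ := (h y hy).bound
    obtain ⟨U, hU, hyU, hUC⟩ := mem_nhdsWithin.mp hC
    exact ⟨U, mem_nhdsWithin_of_mem_nhds (hU.mem_nhds hyU), IsBigO.of_bound C hUC⟩

variable {E : Type*} [NormedAddCommGroup E] [NormedSpace ℝ E] {Ω : Set E} {η : E → ℝ}

/-- `η` is a boundary defining function of `Ω`: positive inside, zero with nonvanishing derivative
on the boundary. Its smoothness is assumed separately, where it is needed. -/
structure IsDefiningFunction (η : E → ℝ) (Ω : Set E) : Prop where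
  pos : ∀ x ∈ Ω, 0 < η x
  eq_zero : ∀ x ∈ frontier Ω, η x = 0
  fderiv_ne_zero : ∀ x ∈ frontier Ω, fderiv ℝ η x ≠ 0

/-- The local interior cone condition: near each `y ∈ closure Ω`, the cone of height `ε` spanned by
`ball v ε` stays in `Ω` when its vertex is put at any point of `Ω`. -/
def InteriorConeCondition (Ω : Set E) : Prop :=
  ∀ y ∈ closure Ω, ∃ v : E, ∃ ε > 0, ∀ x ∈ Ω ∩ ball y ε, ∀ w ∈ ball v ε, ∀ r ∈ Icc 0 ε,
    x + r • w ∈ Ω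

lemma mem_of_pos_on_segment (hΩ : IsOpen Ω) (hη : ∀ x ∈ frontier Ω, η x = 0) {x y : E}
    (hx : x ∈ Ω) (hpos : ∀ z ∈ segment ℝ x y, 0 < η z) : y ∈ Ω := by
  refine (convex_segment x y).isPreconnected.subset_of_closure_inter_subset hΩ
    ⟨x, left_mem_segment ℝ x y, hx⟩ ?_ (right_mem_segment ℝ x y)
  rintro z ⟨hz, hzs⟩
  by_contra hzΩ
  exact (hpos z hzs).ne' (hη z (hΩ.frontier_eq ▸ ⟨hz, hzΩ⟩))

lemma exists_cone_linear_growth {f : E → ℝ} (hf : ContDiff ℝ 1 f) {y : E}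
    (hy : fderiv ℝ f y ≠ 0) :
    ∃ v : E, ∃ c > 0, ∃ ρ > 0, ∀ x ∈ ball y ρ, ∀ w ∈ ball v ρ, ∀ t ≥ 0,
      x + t • w ∈ ball y ρ → f x + c * t ≤ f (x + t • w) := by
  obtain ⟨v, hv⟩ : ∃ v, 0 < fderiv ℝ f y v := by
    obtain ⟨v, hv⟩ := DFunLike.ne_iff.mp hy
    rcases (show fderiv ℝ f y v ≠ 0 from hv).lt_or_gt with h | h
    · exact ⟨-v, by simpa using h⟩
    · exact ⟨v, h⟩
  have hcont : Continuous fun p : E × E => fderiv ℝ f p.1 p.2 :=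
    ((hf.continuous_fderiv one_ne_zero).comp continuous_fst).clm_apply continuous_snd
  obtain ⟨ρ, hρ, hslope⟩ := Metric.eventually_nhds_iff_ball.mp
    (hcont.continuousAt.eventually (lt_mem_nhds (half_lt_self hv)) : ∀ᶠ p in 𝓝 (y, v), _)
  refine ⟨v, _, half_pos hv, ρ, hρ, fun x hx w hw t ht hxt => ?_⟩
  obtain ⟨z, hz, hmvt⟩ := domain_mvt
    (fun z _ => (hf.differentiable one_ne_zero z).hasFDerivAt.hasFDerivWithinAt)
    (convex_ball y ρ) hx hxt
  have hzw := hslope (z, w) (ball_prod_same y v ρ ▸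
    ⟨(convex_ball y ρ).segment_subset hx hxt hz, hw⟩)
  rw [add_sub_cancel_left, map_smul, smul_eq_mul, mul_comm] at hmvt
  linarith [mul_le_mul_of_nonneg_right hzw.le ht]

lemma exists_add_smul_mem_of_mem_nhds {y : E} {U : Set E} (hU : U ∈ 𝓝 y) (v : E) :
    ∃ ε > 0, ∀ x ∈ ball y ε, ∀ w ∈ ball v ε, ∀ r ∈ Icc 0 ε, x + r • w ∈ U := by
  have hcont : Tendsto (fun p : ℝ × E × E => p.2.1 + p.1 • p.2.2) (𝓝 (0, y, v)) (𝓝 y) :=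
    Continuous.tendsto' (by fun_prop) _ _ (by simp)
  obtain ⟨ε, hε, h⟩ := Metric.eventually_nhds_iff_ball.mp (hcont.eventually hU)
  refine ⟨ε / 2, half_pos hε, fun x hx w hw r hr => h (r, x, w) ?_⟩
  have hr' : r ∈ ball 0 ε := by
    rw [mem_ball_zero_iff, Real.norm_of_nonneg hr.1]
    linarith [hr.2]
  have hhalf : ε / 2 ≤ ε := by linarith
  rw [← ball_prod_same, ← ball_prod_same]
  exact ⟨hr', Metric.ball_subset_ball hhalf hx, Metric.ball_subset_ball hhalf hw⟩

theorem IsDefiningFunction.interiorConeCondition (hη : IsDefiningFunction η Ω) (hΩ : IsOpen Ω)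
    (hηC : ContDiff ℝ 1 η) : InteriorConeCondition Ω := by
  intro y hy
  by_cases hyΩ : y ∈ Ω
  · obtain ⟨ε, hε, h⟩ := exists_add_smul_mem_of_mem_nhds (hΩ.mem_nhds hyΩ) 0
    exact ⟨0, ε, hε, fun x hx => h x hx.2⟩
  obtain ⟨v, c, hc, ρ, hρ, hgrowth⟩ :=
    exists_cone_linear_growth hηC (hη.fderiv_ne_zero y (hΩ.frontier_eq ▸ ⟨hy, hyΩ⟩))
  obtain ⟨ε, hε, hball⟩ := exists_add_smul_mem_of_mem_nhds (Metric.ball_mem_nhds y hρ) v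
  refine ⟨v, min ε ρ, lt_min hε hρ, fun x hx w hw r hr => ?_⟩
  have hxε := Metric.ball_subset_ball (min_le_left ε ρ) hx.2
  have hwε := Metric.ball_subset_ball (min_le_left ε ρ) hw
  refine mem_of_pos_on_segment hΩ hη.eq_zero hx.1 fun z hz => ?_
  obtain ⟨θ, hθ, rfl⟩ := (segment_eq_image' ℝ x (x + r • w)).subset hz
  simp only [add_sub_cancel_left, smul_smul]
  have hθr : 0 ≤ θ * r := mul_nonneg hθ.1 hr.1
  have hθr' : θ * r ≤ ε :=
    (mul_le_of_le_one_left hr.1 hθ.2).trans (hr.2.trans (min_le_left ε ρ))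
  calc 0 < η x := hη.pos x hx.1
    _ ≤ η x + c * (θ * r) := le_add_of_nonneg_right (mul_nonneg hc.le hθr)
    _ ≤ η (x + (θ * r) • w) := hgrowth x (Metric.ball_subset_ball (min_le_right ε ρ) hx.2) w
        (Metric.ball_subset_ball (min_le_right ε ρ) hw) _ hθr (hball x hxε w hwε _ ⟨hθr, hθr'⟩)

lemma IsDefiningFunction.infDist_compl_isBigO (hη : IsDefiningFunction η Ω)
    (hηC : ContDiff ℝ 1 η) {y : E} (hy : y ∈ frontier Ω) :
    (infDist · Ωᶜ) =O[𝓝[Ω] y] η := by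
  obtain ⟨v, c, hc, ρ, hρ, hgrowth⟩ := exists_cone_linear_growth hηC (hη.fderiv_ne_zero y hy)
  have hnear : ∀ᶠ x in 𝓝 y, x - (η x / c) • v ∈ ball y ρ := by
    have hcont : Continuous fun x => x - (η x / c) • v :=
      continuous_id.sub ((hηC.continuous.div_const c).smul continuous_const)
    refine hcont.continuousAt.eventually (Metric.isOpen_ball.mem_nhds ?_)
    simp [hη.eq_zero y hy, hρ]
  refine IsBigO.of_bound (‖v‖ / c) ?_
  filter_upwards [mem_nhdsWithin_of_mem_nhds hnear,
    mem_nhdsWithin_of_mem_nhds (Metric.ball_mem_nhds y hρ), self_mem_nhdsWithin] with x hx hxρ hxΩ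
  have hηx := hη.pos x hxΩ
  have hback : x - (η x / c) • v + (η x / c) • v = x := sub_add_cancel _ _
  have hout : x - (η x / c) • v ∈ Ωᶜ := fun hmem => by
    have hle := hgrowth _ hx v (Metric.mem_ball_self hρ) (η x / c) (by positivity)
      (hback.symm ▸ hxρ)
    rw [hback, mul_div_cancel₀ _ hc.ne'] at hle
    linarith [hη.pos _ hmem]
  rw [Real.norm_of_nonneg Metric.infDist_nonneg, Real.norm_of_nonneg hηx.le]
  calc infDist x Ωᶜ ≤ dist x (x - (η x / c) • v) := Metric.infDist_le_dist_of_mem hout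
    _ = ‖v‖ / c * η x := by
        rw [dist_eq_norm, sub_sub_cancel, norm_smul, Real.norm_of_nonneg (by positivity)]
        ring

variable [FiniteDimensional ℝ E] {F : Type*} [NormedAddCommGroup F] [NormedSpace ℝ F] {h : E → F}

lemma norm_le_mul_infDist_compl (hΩ : IsOpen Ω) (hΩc : Ωᶜ.Nonempty) {L : ℝ}
    (hd : ∀ x ∈ closure Ω, DifferentiableAt ℝ h x) (hL : ∀ x ∈ closure Ω, ‖fderiv ℝ h x‖ ≤ L)
    (h0 : ∀ x ∈ frontier Ω, h x = 0) {x : E} (hx : x ∈ Ω) : ‖h x‖ ≤ L * infDist x Ωᶜ := by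
  obtain ⟨y, hy, hxy⟩ := hΩ.isClosed_compl.exists_infDist_eq_dist hΩc x
  have hdist : dist x y ≠ 0 := dist_ne_zero.mpr fun heq => hy (heq ▸ hx)
  have hball : closedBall x (dist x y) ⊆ closure Ω := by
    rw [← closure_ball x hdist, ← hxy]
    exact closure_mono Metric.ball_infDist_compl_subset
  have hymem : y ∈ closedBall x (dist x y) := by simp [dist_comm]
  have hmvt := (convex_closedBall x (dist x y)).norm_image_sub_le_of_norm_fderiv_le
    (fun z hz => hd z (hball hz)) (fun z hz => hL z (hball hz)) hymem
    (Metric.mem_closedBall_self dist_nonneg)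
  rwa [h0 y (hΩ.frontier_eq ▸ ⟨hball hymem, hy⟩), sub_zero, ← dist_eq_norm, ← hxy] at hmvt

theorem IsDefiningFunction.isBigO_of_eq_zero_on_frontier (hη : IsDefiningFunction η Ω)
    (hΩ : IsOpen Ω) (hΩb : Bornology.IsBounded Ω) (hηC : ContDiff ℝ 1 η)
    (hd : ∀ x ∈ closure Ω, DifferentiableAt ℝ h x) (hc : ContinuousOn (fderiv ℝ h) (closure Ω))
    (h0 : ∀ x ∈ frontier Ω, h x = 0) : h =O[𝓟 Ω] η := by
  refine isBigO_principal_of_forall_nhdsWithin hΩb.isCompact_closure fun y hy => ?_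
  by_cases hyΩ : y ∈ Ω
  · have hηy := (hη.pos y hyΩ).ne'
    have hequiv := (isEquivalent_const_iff_tendsto hηy).mpr (hηC.continuous.tendsto y)
    exact ((isBigO_const_of_tendsto (hd y hy).continuousAt hηy).trans hequiv.isBigO_symm).mono
      nhdsWithin_le_nhds
  obtain ⟨L, hL⟩ := hΩb.isCompact_closure.exists_bound_of_continuousOn hc
  refine IsBigO.trans (IsBigO.of_bound L ?_)
    (hη.infDist_compl_isBigO hηC (hΩ.frontier_eq ▸ ⟨hy, hyΩ⟩))
  filter_upwards [self_mem_nhdsWithin] with x hx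
  rw [Real.norm_of_nonneg Metric.infDist_nonneg]
  exact norm_le_mul_infDist_compl hΩ ⟨y, hyΩ⟩ hd hL h0 hx

end Geometry

section NashInequality

lemma measurable_indicator_enorm {X F : Type*} [TopologicalSpace X] [MeasurableSpace X]
    [BorelSpace X] [SeminormedAddCommGroup F] {f : X → F} {S : Set X} (hS : MeasurableSet S)
    (hf : ContinuousOn f S) :
    Measurable (S.indicator fun x => ‖f x‖ₑ) := by
  classical
  rw [← piecewise_eq_indicator]
  exact (continuous_enorm.comp_continuousOn hf).measurable_piecewise continuousOn_const hS

lemma lintegral_lintegral_mul_add {G : Type*} [AddGroup G] [MeasurableSpace G] [MeasurableAdd G]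
    {μ : Measure G} [μ.IsAddLeftInvariant] {U : G → ENNReal} (hU : Measurable U) :
    ∫⁻ x, ∫⁻ k, U x * U (x + k) ∂μ ∂μ = (∫⁻ x, U x ∂μ) ^ 2 := by
  have hinner : ∀ x, ∫⁻ k, U x * U (x + k) ∂μ = U x * ∫⁻ k, U k ∂μ := fun x => by
    rw [lintegral_const_mul _ (by fun_prop), lintegral_add_left_eq_self]
  simp only [hinner, lintegral_mul_const _ hU, sq]

variable {E : Type*} [NormedAddCommGroup E] [NormedSpace ℝ E] {Ω P B : Set E}
  {F : Type*} [NormedAddCommGroup F] [NormedSpace ℝ F]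

lemma sq_intervalIntegral_le {g : ℝ → ℝ} (hg : ContinuousOn g (Icc 0 1)) :
    (∫ s in (0 : ℝ)..1, g s) ^ 2 ≤ ∫ s in (0 : ℝ)..1, g s ^ 2 := by
  have : IsProbabilityMeasure (volume.restrict (Ioc (0 : ℝ) 1)) := ⟨by simp⟩
  simp only [intervalIntegral.integral_of_le zero_le_one]
  exact even_two.convexOn_pow.map_integral_le (by fun_prop) isClosed_univ (by simp)
    (hg.integrableOn_Icc.mono_set Ioc_subset_Icc_self)
    ((hg.pow 2).integrableOn_Icc.mono_set Ioc_subset_Icc_self)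

lemma sq_norm_add_sub_le [CompleteSpace F] {u : E → F} (hΩ : IsOpen Ω) (hu : ContDiffOn ℝ 1 u Ω)
    {x k : E} (hseg : ∀ s ∈ Icc (0 : ℝ) 1, x + s • k ∈ Ω) :
    ‖u (x + k) - u x‖ ^ 2 ≤ ‖k‖ ^ 2 * ∫ s in (0 : ℝ)..1, ‖fderiv ℝ u (x + s • k)‖ ^ 2 := by
  have hline : Continuous fun s : ℝ => x + s • k := by fun_prop
  have hcont : ContinuousOn (fun s : ℝ => fderiv ℝ u (x + s • k)) (Icc 0 1) :=
    (hu.continuousOn_fderiv_of_isOpen hΩ le_rfl).comp hline.continuousOn hseg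
  have hderiv : ∀ s ∈ uIcc (0 : ℝ) 1,
      HasDerivAt (fun s : ℝ => u (x + s • k)) (fderiv ℝ u (x + s • k) k) s := by
    intro s hs
    rw [uIcc_of_le zero_le_one] at hs
    have hlineDeriv : HasDerivAt (fun s : ℝ => x + s • k) k s := by
      simpa using ((hasDerivAt_id s).smul_const k).const_add x
    exact ((hu.differentiableOn one_ne_zero).differentiableAt
      (hΩ.mem_nhds (hseg s hs))).hasFDerivAt.comp_hasDerivAt s hlineDeriv
  have hint : IntervalIntegrable (fun s : ℝ => fderiv ℝ u (x + s • k) k) volume 0 1 :=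
    (hcont.clm_apply continuousOn_const).intervalIntegrable_of_Icc zero_le_one
  have hnorm : ‖u (x + k) - u x‖ ≤ ‖k‖ * ∫ s in (0 : ℝ)..1, ‖fderiv ℝ u (x + s • k)‖ := by
    have hftc := intervalIntegral.integral_eq_sub_of_hasDerivAt hderiv hint
    simp only [one_smul, zero_smul, add_zero] at hftc
    rw [← hftc, ← intervalIntegral.integral_const_mul]
    refine intervalIntegral.norm_integral_le_of_norm_le zero_le_one
      (ae_of_all _ fun s _ => ?_)
      ((hcont.norm.intervalIntegrable_of_Icc zero_le_one).const_mul _)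
    exact (ContinuousLinearMap.le_opNorm _ k).trans_eq (mul_comm _ _)
  calc ‖u (x + k) - u x‖ ^ 2
      ≤ (‖k‖ * ∫ s in (0 : ℝ)..1, ‖fderiv ℝ u (x + s • k)‖) ^ 2 := by gcongr
    _ ≤ ‖k‖ ^ 2 * ∫ s in (0 : ℝ)..1, ‖fderiv ℝ u (x + s • k)‖ ^ 2 := by
        rw [mul_pow]
        gcongr
        exact sq_intervalIntegral_le hcont.norm

lemma sq_norm_le_sq_norm_sub_add {G : Type*} [SeminormedAddCommGroup G] (a b : G) :
    ‖a‖ ^ 2 ≤ ‖b - a‖ ^ 2 + 2 * (‖a‖ * ‖b‖) := by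
  nlinarith [abs_norm_sub_norm_le b a, sq_abs (‖b‖ - ‖a‖), abs_nonneg (‖b‖ - ‖a‖),
    sq_nonneg ‖b‖, norm_nonneg (b - a)]

lemma sq_enorm_le_lintegral_segment_add [CompleteSpace F] {u : E → F} (hΩ : IsOpen Ω)
    (hu : ContDiffOn ℝ 1 u Ω) {x k : E} (hseg : ∀ s ∈ Icc (0 : ℝ) 1, x + s • k ∈ Ω) :
    ‖u x‖ₑ ^ 2 ≤ ‖k‖ₑ ^ 2 * (∫⁻ s in Icc (0 : ℝ) 1, ‖fderiv ℝ u (x + s • k)‖ₑ ^ 2)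
      + 2 * (‖u x‖ₑ * ‖u (x + k)‖ₑ) := by
  have hline : Continuous fun s : ℝ => x + s • k := by fun_prop
  have hint : IntegrableOn (fun s : ℝ => ‖fderiv ℝ u (x + s • k)‖ ^ 2) (Icc 0 1) :=
    (((hu.continuousOn_fderiv_of_isOpen hΩ le_rfl).comp hline.continuousOn hseg).norm.pow
      2).integrableOn_Icc
  have hlint : ∫⁻ s in Icc (0 : ℝ) 1, ‖fderiv ℝ u (x + s • k)‖ₑ ^ 2
      = ENNReal.ofReal (∫ s in (0 : ℝ)..1, ‖fderiv ℝ u (x + s • k)‖ ^ 2) := by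
    rw [intervalIntegral.integral_of_le zero_le_one, ← integral_Icc_eq_integral_Ioc,
      ofReal_integral_eq_lintegral_ofReal hint (ae_of_all _ fun s => sq_nonneg _)]
    simp only [ENNReal.ofReal_pow (norm_nonneg _), ofReal_norm]
  have hreal := (sq_norm_le_sq_norm_sub_add (u x) (u (x + k))).trans
    (add_le_add_left (sq_norm_add_sub_le hΩ hu hseg) _)
  have := ENNReal.ofReal_le_ofReal hreal
  rw [hlint]
  rwa [ENNReal.ofReal_add (mul_nonneg (by positivity) (intervalIntegral.integral_nonneg zero_le_one
    fun s _ => sq_nonneg _)) (by positivity), ENNReal.ofReal_mul (by positivity),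
    ENNReal.ofReal_mul zero_le_two, ENNReal.ofReal_mul (by positivity),
    ENNReal.ofReal_pow (norm_nonneg _), ENNReal.ofReal_pow (norm_nonneg _), ofReal_norm,
    ofReal_norm, ofReal_norm, ENNReal.ofReal_ofNat] at this

variable [MeasurableSpace E] {μ : Measure E}

/-- The Nash-type inequality on the part `S ∩ Ω` of `Ω`, at all small scales `r`. -/
def HasNashInequality (μ : Measure E) (Ω S : Set E) : Prop :=
  ∃ C : ENNReal, C ≠ ⊤ ∧ ∃ r₀ > 0, ∀ r ∈ Ioc (0 : ℝ) r₀, ∀ u : E → ℝ, ContDiffOn ℝ 1 u Ω →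
    ∫⁻ x in S ∩ Ω, ‖u x‖ₑ ^ 2 ∂μ ≤
      C * (ENNReal.ofReal (r ^ 2) * ∫⁻ x in Ω, ‖fderiv ℝ u x‖ₑ ^ 2 ∂μ
        + ENNReal.ofReal (r ^ finrank ℝ E)⁻¹ * (∫⁻ x in Ω, ‖u x‖ₑ ∂μ) ^ 2)

lemma HasNashInequality.mono {S S' : Set E} (h : HasNashInequality μ Ω S') (hS : S ⊆ S') :
    HasNashInequality μ Ω S := by
  obtain ⟨C, hC, r₀, hr₀, h⟩ := h
  exact ⟨C, hC, r₀, hr₀, fun r hr u hu =>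
    (lintegral_mono_set (inter_subset_inter_left Ω hS)).trans (h r hr u hu)⟩

lemma HasNashInequality.union {S S' : Set E} (h : HasNashInequality μ Ω S)
    (h' : HasNashInequality μ Ω S') : HasNashInequality μ Ω (S ∪ S') := by
  obtain ⟨C, hC, r₀, hr₀, h⟩ := h
  obtain ⟨C', hC', r₀', hr₀', h'⟩ := h'
  refine ⟨C + C', ENNReal.add_ne_top.mpr ⟨hC, hC'⟩, min r₀ r₀', lt_min hr₀ hr₀',
    fun r hr u hu => ?_⟩
  rw [union_inter_distrib_right, add_mul]
  exact (lintegral_union_le _ _ _).trans (add_le_add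
    (h r ⟨hr.1, hr.2.trans (min_le_left _ _)⟩ u hu)
    (h' r ⟨hr.1, hr.2.trans (min_le_right _ _)⟩ u hu))

lemma HasNashInequality.exists_integral_sq_le_scale (h : HasNashInequality μ Ω Ω) :
    ∃ C ≥ 0, ∃ r₀ > 0, ∀ r ∈ Ioc (0 : ℝ) r₀, ∀ u : E → ℝ, ContDiffOn ℝ 1 u Ω →
      IntegrableOn u Ω μ → IntegrableOn (fun x => ‖fderiv ℝ u x‖ ^ 2) Ω μ →
      ∫ x in Ω, u x ^ 2 ∂μ ≤ C * (r ^ 2 * ∫ x in Ω, ‖fderiv ℝ u x‖ ^ 2 ∂μ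
        + (r ^ finrank ℝ E)⁻¹ * (∫ x in Ω, ‖u x‖ ∂μ) ^ 2) := by
  obtain ⟨C, hC, r₀, hr₀, h⟩ := h
  refine ⟨C.toReal, C.toReal_nonneg, r₀, hr₀, fun r hr u hu hu₁ hu₂ => ?_⟩
  have hr0 := hr.1
  have hL1 : ∫⁻ x in Ω, ‖u x‖ₑ ∂μ = ENNReal.ofReal (∫ x in Ω, ‖u x‖ ∂μ) :=
    (ofReal_integral_norm_eq_lintegral_enorm hu₁).symm
  have hDirichlet : ∫⁻ x in Ω, ‖fderiv ℝ u x‖ₑ ^ 2 ∂μ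
      = ENNReal.ofReal (∫ x in Ω, ‖fderiv ℝ u x‖ ^ 2 ∂μ) := by
    rw [ofReal_integral_eq_lintegral_ofReal hu₂ (ae_of_all _ fun x => sq_nonneg _)]
    simp only [ENNReal.ofReal_pow (norm_nonneg _), ofReal_norm]
  have hL2 : ENNReal.ofReal (∫ x in Ω, u x ^ 2 ∂μ) ≤ ∫⁻ x in Ω ∩ Ω, ‖u x‖ₑ ^ 2 ∂μ := by
    rw [← Real.enorm_of_nonneg (integral_nonneg fun x => sq_nonneg (u x)), inter_self]
    exact (enorm_integral_le_lintegral_enorm _).trans_eq (by simp only [_root_.enorm_pow])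
  rw [← ENNReal.ofReal_le_ofReal_iff (by positivity)]
  refine (hL2.trans (h r hr u hu)).trans_eq ?_
  rw [hL1, hDirichlet, ENNReal.ofReal_mul C.toReal_nonneg, ENNReal.ofReal_toReal hC,
    ENNReal.ofReal_add (by positivity) (by positivity), ENNReal.ofReal_mul (by positivity),
    ENNReal.ofReal_mul (by positivity), ENNReal.ofReal_pow hr0.le,
    ENNReal.ofReal_pow (integral_nonneg fun x => norm_nonneg _)]

theorem HasNashInequality.exists_integral_sq_le (h : HasNashInequality μ Ω Ω) :
    ∃ c > 0, ∀ σ > 0, ∀ u : E → ℝ, ContDiffOn ℝ 1 u Ω →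
      IntegrableOn u Ω μ → IntegrableOn (fun x => ‖fderiv ℝ u x‖ ^ 2) Ω μ →
      ∫ x in Ω, u x ^ 2 ∂μ ≤ c * (σ * ∫ x in Ω, ‖fderiv ℝ u x‖ ^ 2 ∂μ
        + (1 + (σ ^ finrank ℝ E)⁻¹) * (∫ x in Ω, ‖u x‖ ∂μ) ^ 2) := by
  obtain ⟨C, hC, r₀, hr₀, h⟩ := h.exists_integral_sq_le_scale
  set n := finrank ℝ E
  set σ₀ := min 1 r₀
  have hσ₀ : 0 < σ₀ := lt_min one_pos hr₀
  refine ⟨(C + 1) * (1 + (σ₀ ^ n)⁻¹), by positivity, fun σ hσ u hu hu₁ hu₂ => ?_⟩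
  set D := ∫ x in Ω, ‖fderiv ℝ u x‖ ^ 2 ∂μ
  have hr : 0 < min σ σ₀ := lt_min hσ hσ₀
  have hr_sq : min σ σ₀ ^ 2 ≤ (1 + (σ₀ ^ n)⁻¹) * σ := by
    have hr₁ : min σ σ₀ ≤ 1 := (min_le_right _ _).trans (min_le_left _ _)
    calc min σ σ₀ ^ 2 ≤ min σ σ₀ := pow_le_of_le_one hr.le hr₁ two_ne_zero
      _ ≤ σ := min_le_left _ _
      _ ≤ (1 + (σ₀ ^ n)⁻¹) * σ := le_mul_of_one_le_left hσ.le (by simp [hσ₀.le])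
  have hr_inv : (min σ σ₀ ^ n)⁻¹ ≤ (1 + (σ₀ ^ n)⁻¹) * (1 + (σ ^ n)⁻¹) := by
    have hprod : 0 ≤ (σ₀ ^ n)⁻¹ * (σ ^ n)⁻¹ := by positivity
    have hσn : 0 ≤ (σ ^ n)⁻¹ := by positivity
    have hσ₀n : 0 ≤ (σ₀ ^ n)⁻¹ := by positivity
    rcases min_choice σ σ₀ with heq | heq <;> rw [heq] <;> linarith
  calc ∫ x in Ω, u x ^ 2 ∂μ
      ≤ C * (min σ σ₀ ^ 2 * D + (min σ σ₀ ^ n)⁻¹ * (∫ x in Ω, ‖u x‖ ∂μ) ^ 2) :=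
        h _ ⟨hr, (min_le_right _ _).trans (min_le_right _ _)⟩ u hu hu₁ hu₂
    _ ≤ (C + 1) * ((1 + (σ₀ ^ n)⁻¹) * σ * D
          + (1 + (σ₀ ^ n)⁻¹) * (1 + (σ ^ n)⁻¹) * (∫ x in Ω, ‖u x‖ ∂μ) ^ 2) := by
        gcongr
        exact le_add_of_nonneg_right zero_le_one
    _ = (C + 1) * (1 + (σ₀ ^ n)⁻¹) * (σ * D
          + (1 + (σ ^ n)⁻¹) * (∫ x in Ω, ‖u x‖ ∂μ) ^ 2) := by ring

variable [FiniteDimensional ℝ E] [BorelSpace E] [μ.IsAddHaarMeasure]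

lemma lintegral_lintegral_lintegral_segment {G : E → ENNReal} (hG : Measurable G) :
    ∫⁻ x, (∫⁻ k in B, (∫⁻ s in Icc (0 : ℝ) 1, G (x + s • k)) ∂μ) ∂μ = μ B * ∫⁻ x, G x ∂μ := by
  have hG₃ : Measurable fun p : (E × E) × ℝ => G (p.1.1 + p.2 • p.1.2) := by fun_prop
  have hG₂ : Measurable fun p : E × E => ∫⁻ s in Icc (0 : ℝ) 1, G (p.1 + s • p.2) :=
    hG₃.lintegral_prod_right'
  have hswap : ∀ k, ∫⁻ x, (∫⁻ s in Icc (0 : ℝ) 1, G (x + s • k)) ∂μ = ∫⁻ x, G x ∂μ := fun k => by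
    rw [lintegral_lintegral_swap (by fun_prop)]
    simp [lintegral_add_right_eq_self]
  rw [lintegral_lintegral_swap hG₂.aemeasurable]
  simp only [hswap, setLIntegral_const, mul_comm]

lemma measure_mul_lintegral_le_of_segment_bound {f G U : E → ENNReal} (hG : Measurable G)
    (hU : Measurable U) (hP : MeasurableSet P) (hB : MeasurableSet B) {c : ENNReal}
    (hf : ∀ x ∈ P, ∀ k ∈ B,
      f x ≤ c * (∫⁻ s in Icc (0 : ℝ) 1, G (x + s • k)) + 2 * (U x * U (x + k))) :
    μ B * ∫⁻ x in P, f x ∂μ ≤ c * (μ B * ∫⁻ x, G x ∂μ) + 2 * (∫⁻ x, U x ∂μ) ^ 2 := by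
  have hG₃ : Measurable fun p : (E × E) × ℝ => G (p.1.1 + p.2 • p.1.2) := by fun_prop
  have hG₂ : Measurable fun p : E × E => ∫⁻ s in Icc (0 : ℝ) 1, G (p.1 + s • p.2) :=
    hG₃.lintegral_prod_right'
  have hGx (x) : Measurable fun k => ∫⁻ s in Icc (0 : ℝ) 1, G (x + s • k) :=
    hG₂.comp measurable_prodMk_left
  calc μ B * ∫⁻ x in P, f x ∂μ
      ≤ ∫⁻ x in P, (∫⁻ _ in B, f x ∂μ) ∂μ := by
        simp only [setLIntegral_const, mul_comm _ (μ B)]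
        exact lintegral_const_mul_le _ _
    _ ≤ ∫⁻ x in P, (∫⁻ k in B, (c * (∫⁻ s in Icc (0 : ℝ) 1, G (x + s • k))
          + 2 * (U x * U (x + k))) ∂μ) ∂μ :=
        setLIntegral_mono' hP fun x hx => setLIntegral_mono' hB fun k hk => hf x hx k hk
    _ ≤ ∫⁻ x, (c * (∫⁻ k in B, (∫⁻ s in Icc (0 : ℝ) 1, G (x + s • k)) ∂μ)
          + 2 * ∫⁻ k, U x * U (x + k) ∂μ) ∂μ := by
        refine (setLIntegral_le_lintegral _ _).trans (lintegral_mono fun x => ?_)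
        rw [lintegral_add_left ((hGx x).const_mul c), lintegral_const_mul _ (hGx x),
          lintegral_const_mul _ (by fun_prop)]
        gcongr
        exact Measure.restrict_le_self
    _ = c * (μ B * ∫⁻ x, G x ∂μ) + 2 * (∫⁻ x, U x ∂μ) ^ 2 := by
        rw [lintegral_add_left (hG₂.lintegral_prod_right'.const_mul c),
          lintegral_const_mul _ hG₂.lintegral_prod_right', lintegral_const_mul' _ _ (by simp),
          lintegral_lintegral_lintegral_segment hG, lintegral_lintegral_mul_add hU]

theorem measure_mul_lintegral_sq_enorm_le [CompleteSpace F] {u : E → F} (hΩ : IsOpen Ω)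
    (hu : ContDiffOn ℝ 1 u Ω) (hP : MeasurableSet P) (hB : MeasurableSet B) {c : ENNReal}
    (hc : ∀ k ∈ B, ‖k‖ₑ ≤ c) (hseg : ∀ x ∈ P, ∀ k ∈ B, ∀ s ∈ Icc (0 : ℝ) 1, x + s • k ∈ Ω) :
    μ B * ∫⁻ x in P, ‖u x‖ₑ ^ 2 ∂μ ≤
      c ^ 2 * (μ B * ∫⁻ x in Ω, ‖fderiv ℝ u x‖ₑ ^ 2 ∂μ) + 2 * (∫⁻ x in Ω, ‖u x‖ₑ ∂μ) ^ 2 := by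
  have hΩm := hΩ.measurableSet
  have hG : Measurable (Ω.indicator fun x => ‖fderiv ℝ u x‖ₑ ^ 2) := by
    simpa only [Pi.pow_apply, enorm_pow, enorm_norm] using measurable_indicator_enorm hΩm
      ((hu.continuousOn_fderiv_of_isOpen hΩ le_rfl).norm.pow 2)
  rw [← lintegral_indicator hΩm, ← lintegral_indicator hΩm]
  refine measure_mul_lintegral_le_of_segment_bound hG
    (measurable_indicator_enorm hΩm hu.continuousOn) hP hB fun x hx k hk => ?_
  have hmem := hseg x hx k hk
  have hGseg : ∫⁻ s in Icc (0 : ℝ) 1, Ω.indicator (fun x => ‖fderiv ℝ u x‖ₑ ^ 2) (x + s • k)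
      = ∫⁻ s in Icc (0 : ℝ) 1, ‖fderiv ℝ u (x + s • k)‖ₑ ^ 2 :=
    setLIntegral_congr_fun measurableSet_Icc fun s hs => indicator_of_mem (hmem s hs) _
  rw [hGseg, indicator_of_mem (by simpa using hmem 0 (by simp)),
    indicator_of_mem (by simpa using hmem 1 (by simp))]
  refine (sq_enorm_le_lintegral_segment_add hΩ hu hmem).trans ?_
  gcongr
  exact hc k hk

lemma le_add_mul_add_of_mul_le {I D M K s ρ β : ENNReal} (hρ : ρ ≠ 0) (hρ' : ρ ≠ ⊤) (hβ : β ≠ 0)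
    (hβ' : β ≠ ⊤) (h : ρ * β * I ≤ (s * K) ^ 2 * (ρ * β * D) + 2 * M) :
    I ≤ (K ^ 2 + 2 * β⁻¹) * (s ^ 2 * D + ρ⁻¹ * M) := by
  have hρβ : (ρ * β)⁻¹ * (ρ * β) = 1 := ENNReal.inv_mul_cancel (mul_ne_zero hρ hβ) (by finiteness)
  calc I = (ρ * β)⁻¹ * (ρ * β * I) := by rw [← mul_assoc, hρβ, one_mul]
    _ ≤ (ρ * β)⁻¹ * ((s * K) ^ 2 * (ρ * β * D) + 2 * M) := by gcongr
    _ = (ρ * β)⁻¹ * (ρ * β) * (K ^ 2 * (s ^ 2 * D)) + (ρ * β)⁻¹ * (2 * M) := by ring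
    _ = K ^ 2 * (s ^ 2 * D) + 2 * β⁻¹ * (ρ⁻¹ * M) := by
        rw [hρβ, one_mul, ENNReal.mul_inv (.inl hρ) (.inl hρ')]
        ring
    _ ≤ (K ^ 2 + 2 * β⁻¹) * (s ^ 2 * D + ρ⁻¹ * M) := by
        rw [add_mul]
        gcongr
        · exact le_self_add
        · exact le_add_self

lemma InteriorConeCondition.exists_nhds_hasNashInequality (hcone : InteriorConeCondition Ω)
    (hΩ : IsOpen Ω) {y : E} (hy : y ∈ closure Ω) : ∃ S ∈ 𝓝 y, HasNashInequality μ Ω S := by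
  obtain ⟨v, ε, hε, hv⟩ := hcone y hy
  set β := μ (ball v ε)
  have hβ0 : β ≠ 0 := (Metric.measure_ball_pos μ v hε).ne'
  have hβtop : β ≠ ⊤ := measure_ball_lt_top.ne
  set K := ENNReal.ofReal (‖v‖ + ε)
  refine ⟨ball y ε, Metric.ball_mem_nhds y hε, K ^ 2 + 2 * β⁻¹, by finiteness, ε, hε,
    fun r hr u hu => ?_⟩
  have hstep : ∀ k ∈ r • ball v ε, ‖k‖ₑ ≤ ENNReal.ofReal r * K := by
    rintro _ ⟨w, hw, rfl⟩
    rw [enorm_smul, Real.enorm_of_nonneg hr.1.le, ← ofReal_norm]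
    have hw' : ‖w‖ ≤ ‖v‖ + ε := by linarith [norm_sub_norm_le w v, mem_ball_iff_norm.mp hw]
    exact mul_le_mul_right (ENNReal.ofReal_le_ofReal hw') _
  have hseg : ∀ x ∈ ball y ε ∩ Ω, ∀ k ∈ r • ball v ε, ∀ s ∈ Icc (0 : ℝ) 1, x + s • k ∈ Ω := by
    rintro x hx _ ⟨w, hw, rfl⟩ s hs
    rw [smul_smul]
    exact hv x hx.symm w hw (s * r)
      ⟨mul_nonneg hs.1 hr.1.le, (mul_le_of_le_one_left hr.1.le hs.2).trans hr.2⟩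
  have hball : MeasurableSet (r • ball v ε) := measurableSet_ball.const_smul₀ r
  have hvol : μ (r • ball v ε) = ENNReal.ofReal (r ^ finrank ℝ E) * β := by
    rw [Measure.addHaar_smul, abs_of_pos (pow_pos hr.1 _)]
  have key := measure_mul_lintegral_sq_enorm_le (μ := μ) hΩ hu
    (measurableSet_ball.inter hΩ.measurableSet) hball hstep hseg
  have hr0 : ENNReal.ofReal (r ^ finrank ℝ E) ≠ 0 := (ENNReal.ofReal_pos.mpr (pow_pos hr.1 _)).ne'
  rw [ENNReal.ofReal_pow hr.1.le 2, ENNReal.ofReal_inv_of_pos (pow_pos hr.1 _)]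
  exact le_add_mul_add_of_mul_le hr0 ENNReal.ofReal_ne_top hβ0 hβtop (hvol ▸ key)

theorem InteriorConeCondition.hasNashInequality (hcone : InteriorConeCondition Ω)
    (hΩ : IsOpen Ω) (hΩb : Bornology.IsBounded Ω) : HasNashInequality μ Ω Ω := by
  refine (hΩb.isCompact_closure.induction_on (p := HasNashInequality μ Ω)
    ⟨0, by simp, 1, one_pos, by simp⟩ (fun _ _ h h' => h'.mono h)
    (fun _ _ h h' => h.union h') fun y hy => ?_).mono subset_closure
  obtain ⟨S, hS, h⟩ := hcone.exists_nhds_hasNashInequality (μ := μ) hΩ hy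
  exact ⟨S, mem_nhdsWithin_of_mem_nhds hS, h⟩

end NashInequality

section Divergence

lemma integrableOn_of_continuousOn_closure {X F : Type*} [MetricSpace X] [ProperSpace X]
    [MeasurableSpace X] [OpensMeasurableSpace X] [NormedAddCommGroup F] {μ : Measure X}
    [IsFiniteMeasureOnCompacts μ] {Ω : Set X} (hΩb : Bornology.IsBounded Ω) {f : X → F}
    (hf : ContinuousOn f (closure Ω)) : IntegrableOn f Ω μ :=
  (hf.integrableOn_compact hΩb.isCompact_closure).mono_set subset_closure

variable {E F : Type*} [NormedAddCommGroup E] [NormedSpace ℝ E] [NormedAddCommGroup F]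
  [NormedSpace ℝ F] {Ω : Set E} {η : E → ℝ}

/-- A cutoff function of a boundary defining function: it vanishes to second order at `0` and tends
to `1` elsewhere as `n → ∞`. -/
noncomputable def cutoff (n : ℕ) (s : ℝ) : ℝ := 1 - (1 + n * s ^ 2)⁻¹

lemma hasDerivAt_cutoff (n : ℕ) (s : ℝ) :
    HasDerivAt (cutoff n) (2 * n * s / (1 + n * s ^ 2) ^ 2) s := by
  have hden : HasDerivAt (fun s : ℝ => 1 + n * s ^ 2) (n * (2 * s)) s := by
    simpa using ((hasDerivAt_pow 2 s).const_mul (n : ℝ)).const_add 1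
  refine ((hden.inv (by positivity)).const_sub 1).congr_deriv ?_
  ring

lemma contDiff_cutoff (n : ℕ) : ContDiff ℝ 1 (cutoff n) := by
  unfold cutoff
  exact contDiff_const.sub ((by fun_prop : ContDiff ℝ 1 fun s : ℝ => 1 + n * s ^ 2).inv
    fun s => by positivity)

lemma cutoff_eq_div (n : ℕ) (s : ℝ) : cutoff n s = n * s ^ 2 / (1 + n * s ^ 2) := by
  have : 1 + n * s ^ 2 ≠ 0 := by positivity
  rw [cutoff]
  field_simp
  ring

lemma abs_cutoff_le_one (n : ℕ) (s : ℝ) : |cutoff n s| ≤ 1 := by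
  rw [cutoff_eq_div, abs_of_nonneg (by positivity)]
  exact div_le_one_of_le₀ (by linarith) (by positivity)

lemma abs_cutoff_le_mul_sq (n : ℕ) (s : ℝ) : |cutoff n s| ≤ n * s ^ 2 := by
  rw [cutoff_eq_div, abs_of_nonneg (by positivity)]
  exact div_le_self (by positivity) (le_add_of_nonneg_right (by positivity))

lemma abs_deriv_cutoff_mul_abs_le_one (n : ℕ) (s : ℝ) : |deriv (cutoff n) s| * |s| ≤ 1 := by
  rw [(hasDerivAt_cutoff n s).deriv, ← abs_mul,
    show 2 * n * s / (1 + n * s ^ 2) ^ 2 * s = 2 * (n * s ^ 2) / (1 + n * s ^ 2) ^ 2 by ring,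
    abs_of_nonneg (by positivity)]
  refine div_le_one_of_le₀ ?_ (by positivity)
  nlinarith [sq_nonneg ((n : ℝ) * s ^ 2)]

lemma tendsto_inv_one_add_mul_sq {s : ℝ} (hs : s ≠ 0) :
    Tendsto (fun n : ℕ => (1 + n * s ^ 2)⁻¹) atTop (𝓝 0) :=
  (tendsto_atTop_add_const_left _ _
    (tendsto_natCast_atTop_atTop.atTop_mul_const (by positivity))).inv_tendsto_atTop

lemma tendsto_cutoff {s : ℝ} (hs : s ≠ 0) : Tendsto (fun n => cutoff n s) atTop (𝓝 1) := by
  simpa only [cutoff, sub_zero] using (tendsto_inv_one_add_mul_sq hs).const_sub 1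

lemma tendsto_deriv_cutoff {s : ℝ} (hs : s ≠ 0) :
    Tendsto (fun n => deriv (cutoff n) s) atTop (𝓝 0) := by
  have hform (n : ℕ) : deriv (cutoff n) s = 2 / s * (cutoff n s * (1 + n * s ^ 2)⁻¹) := by
    rw [(hasDerivAt_cutoff n s).deriv, cutoff_eq_div]
    field_simp
  simp_rw [hform]
  simpa only [mul_zero] using
    ((tendsto_cutoff hs).mul (tendsto_inv_one_add_mul_sq hs)).const_mul (2 / s)

lemma tendsto_integral_cutoff {X : Type*} [MeasurableSpace X] {ν : Measure X} [IsFiniteMeasure ν]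
    {ρ g h : X → ℝ} {K : ℝ} (hρ : AEStronglyMeasurable ρ ν) (hρ0 : ∀ᵐ x ∂ν, ρ x ≠ 0)
    (hg : Integrable g ν) (hh : AEStronglyMeasurable h ν) (hK : ∀ᵐ x ∂ν, ‖h x‖ ≤ K * ‖ρ x‖) :
    Tendsto (fun n => ∫ x, (cutoff n (ρ x) * g x + deriv (cutoff n) (ρ x) * h x) ∂ν) atTop
      (𝓝 (∫ x, g x ∂ν)) := by
  refine tendsto_integral_of_dominated_convergence (fun x => ‖g x‖ + |K|) (fun n => ?_)
    (hg.norm.add (integrable_const _)) (fun n => ?_) ?_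
  · have hφ := contDiff_cutoff n
    exact ((hφ.continuous.comp_aestronglyMeasurable hρ).mul hg.aestronglyMeasurable).add
      (((hφ.continuous_deriv le_rfl).comp_aestronglyMeasurable hρ).mul hh)
  · filter_upwards [hK] with x hx
    refine (norm_add_le _ _).trans (add_le_add ?_ ?_) <;> rw [norm_mul]
    · exact mul_le_of_le_one_left (norm_nonneg _) (abs_cutoff_le_one n _)
    · calc ‖deriv (cutoff n) (ρ x)‖ * ‖h x‖
          ≤ ‖deriv (cutoff n) (ρ x)‖ * (|K| * ‖ρ x‖) := by
            gcongr
            exact hx.trans (mul_le_mul_of_nonneg_right (le_abs_self K) (norm_nonneg _))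
        _ = |K| * (|deriv (cutoff n) (ρ x)| * |ρ x|) := by simp only [Real.norm_eq_abs]; ring
        _ ≤ |K| := mul_le_of_le_one_right (abs_nonneg K) (abs_deriv_cutoff_mul_abs_le_one n _)
  · filter_upwards [hρ0] with x hx
    simpa only [one_mul, zero_mul, add_zero] using
      ((tendsto_cutoff hx).mul_const (g x)).add ((tendsto_deriv_cutoff hx).mul_const (h x))

lemma hasFDerivAt_indicator_of_isBigO_sq {f : E → F} {f' : E → E →L[ℝ] F} (hΩ : IsOpen Ω)
    (hη : Differentiable ℝ η) (hη0 : ∀ x ∈ frontier Ω, η x = 0)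
    (hf : ∀ x ∈ Ω, HasFDerivAt f (f' x) x) (hfη : f =O[𝓟 Ω] fun x => η x ^ 2) (x : E) :
    HasFDerivAt (Ω.indicator f) (Ω.indicator f' x) x := by
  by_cases hx : x ∈ Ω
  · rw [indicator_of_mem hx]
    exact (hf x hx).congr_of_eventuallyEq
      ((eqOn_indicator (f := f)).eventuallyEq_of_mem (hΩ.mem_nhds hx))
  rw [indicator_of_notMem hx]
  by_cases hxc : x ∈ closure Ω
  · have hηx : η x = 0 := hη0 x (hΩ.frontier_eq ▸ ⟨hxc, hx⟩)
    have hηO : η =O[𝓝 x] fun z => z - x := by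
      simpa only [hηx, sub_zero] using (hη x).hasFDerivAt.isBigO_sub
    have hf_sq : Ω.indicator f =O[𝓝 x] fun z => η z ^ 2 := by
      obtain ⟨C, hC⟩ := hfη.bound
      rw [eventually_principal] at hC
      refine IsBigO.of_bound |C| (Eventually.of_forall fun z => ?_)
      rw [norm_indicator_eq_indicator_norm]
      exact indicator_apply_le' (fun hz => (hC z hz).trans
        (mul_le_mul_of_nonneg_right (le_abs_self C) (norm_nonneg _))) fun _ => by positivity
    exact (hf_sq.trans (hηO.norm_right.pow 2)).hasFDerivAt one_lt_two
  · refine (hasFDerivAt_const (0 : F) x).congr_of_eventuallyEq ?_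
    filter_upwards [isClosed_closure.isOpen_compl.mem_nhds hxc] with z hz
    exact indicator_of_notMem (fun h => hz (subset_closure h)) f

lemma continuousOn_fderiv_smulRight {S : Set E} {V : E → F} (hη : ContDiff ℝ 1 η)
    (hV : ContinuousOn V S) : ContinuousOn (fun x => (fderiv ℝ η x).smulRight (V x)) S :=
  ((ContinuousLinearMap.smulRightL ℝ E F).continuous.comp_continuousOn
    (hη.continuous_fderiv one_ne_zero).continuousOn).clm_apply hV

variable [FiniteDimensional ℝ E] [MeasurableSpace E] [BorelSpace E] {μ : Measure E}
  [μ.IsAddHaarMeasure] [CompleteSpace F] (Λ : (E →L[ℝ] F) →L[ℝ] ℝ)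

lemma integral_clm_fderiv_eq_zero {W : E → F} {W' : E → E →L[ℝ] F}
    (hW : ∀ x, HasFDerivAt W (W' x) x) (hint : Integrable W μ) (hint' : Integrable W' μ) :
    ∫ x, Λ (W' x) ∂μ = 0 := by
  suffices h : ∫ x, W' x ∂μ = 0 by rw [Λ.integral_comp_comm hint', h, Λ.map_zero]
  ext e
  rw [ContinuousLinearMap.integral_apply hint' e]
  simpa using integral_bilinear_hasLineDerivAt_right_eq_neg_left_of_integrable (μ := μ)
    (f := fun _ => (1 : ℝ)) (f' := fun _ => 0) (g' := fun x => W' x e)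
    (B := ContinuousLinearMap.lsmul ℝ ℝ) (by simp)
    (by simpa using hint'.apply_continuousLinearMap e)
    (by simpa using hint) (fun x _ => by simpa using (hasFDerivAt_const (1 : ℝ) x).hasLineDerivAt e)
    (fun x _ => (hW x).hasLineDerivAt e)

lemma setIntegral_cutoff_clm_fderiv_eq_zero (hΩ : IsOpen Ω) (hΩb : Bornology.IsBounded Ω)
    (hη : ContDiff ℝ 1 η) (hη0 : ∀ x ∈ frontier Ω, η x = 0) {V : E → F} {V' : E → E →L[ℝ] F}
    (hV : ∀ x ∈ Ω, HasFDerivAt V (V' x) x) (hVc : ContinuousOn V (closure Ω))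
    (hVc' : ContinuousOn V' (closure Ω)) (n : ℕ) :
    ∫ x in Ω, (cutoff n (η x) * Λ (V' x)
      + deriv (cutoff n) (η x) * Λ ((fderiv ℝ η x).smulRight (V x))) ∂μ = 0 := by
  have hφ := contDiff_cutoff n
  have hφη : Continuous fun x => cutoff n (η x) := hφ.continuous.comp hη.continuous
  have hdφη : Continuous fun x => deriv (cutoff n) (η x) :=
    (hφ.continuous_deriv le_rfl).comp hη.continuous
  set W' := fun x => cutoff n (η x) • V' x
    + deriv (cutoff n) (η x) • (fderiv ℝ η x).smulRight (V x)
  have hW : ∀ x ∈ Ω, HasFDerivAt (fun x => cutoff n (η x) • V x) (W' x) x := by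
    intro x hx
    refine (((hφ.differentiable one_ne_zero _).hasDerivAt.comp_hasFDerivAt x
      (hη.differentiable one_ne_zero x).hasFDerivAt).smul (hV x hx)).congr_fderiv ?_
    ext e
    simp [W', mul_smul]
  have hbound : (fun x => cutoff n (η x) • V x) =O[𝓟 Ω] fun x => η x ^ 2 := by
    obtain ⟨M, hM⟩ := hΩb.isCompact_closure.exists_bound_of_continuousOn hVc
    refine IsBigO.of_bound (n * M) (eventually_principal.mpr fun x hx => ?_)
    rw [norm_smul, norm_pow, Real.norm_eq_abs (η x), sq_abs, mul_right_comm]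
    exact mul_le_mul (abs_cutoff_le_mul_sq n _) (hM x (subset_closure hx)) (norm_nonneg _)
      (by positivity)
  have hzero := integral_clm_fderiv_eq_zero (μ := μ) Λ
    (hasFDerivAt_indicator_of_isBigO_sq hΩ (hη.differentiable one_ne_zero) hη0 hW hbound)
    ((integrableOn_of_continuousOn_closure hΩb
      (hφη.continuousOn.smul hVc)).integrable_indicator hΩ.measurableSet)
    ((integrableOn_of_continuousOn_closure hΩb ((hφη.continuousOn.smul hVc').add
      (hdφη.continuousOn.smul (continuousOn_fderiv_smulRight hη hVc)))).integrable_indicator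
        hΩ.measurableSet)
  rw [← integral_indicator hΩ.measurableSet, ← hzero]
  congr with x
  by_cases hx : x ∈ Ω <;> simp [hx, W']

-- For `F = E` and `Λ` the trace this is the divergence theorem for fields tangent to the boundary.
theorem setIntegral_clm_fderiv_eq_zero (hΩ : IsOpen Ω) (hΩb : Bornology.IsBounded Ω)
    (hη : ContDiff ℝ 1 η) (hηΩ : ∀ x ∈ Ω, η x ≠ 0) (hη0 : ∀ x ∈ frontier Ω, η x = 0)
    {V : E → F} {V' : E → E →L[ℝ] F}
    (hV : ∀ x ∈ Ω, HasFDerivAt V (V' x) x) (hVc : ContinuousOn V (closure Ω))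
    (hVc' : ContinuousOn V' (closure Ω))
    (hVη : (fun x => Λ ((fderiv ℝ η x).smulRight (V x))) =O[𝓟 Ω] η) :
    ∫ x in Ω, Λ (V' x) ∂μ = 0 := by
  obtain ⟨K, hK⟩ := hVη.bound
  rw [eventually_principal] at hK
  have hfin : IsFiniteMeasure (μ.restrict Ω) := ⟨by simpa using hΩb.measure_lt_top⟩
  have hlim := tendsto_integral_cutoff (ν := μ.restrict Ω) hη.continuous.aestronglyMeasurable
    (ae_restrict_of_forall_mem hΩ.measurableSet hηΩ)
    (integrableOn_of_continuousOn_closure hΩb (Λ.continuous.comp_continuousOn hVc'))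
    (integrableOn_of_continuousOn_closure hΩb
      (Λ.continuous.comp_continuousOn (continuousOn_fderiv_smulRight hη hVc))).aestronglyMeasurable
    (ae_restrict_of_forall_mem hΩ.measurableSet hK)
  exact tendsto_nhds_unique hlim (tendsto_const_nhds.congr fun n =>
    (setIntegral_cutoff_clm_fderiv_eq_zero Λ hΩ hΩb hη hη0 hV hVc hVc' n).symm)

end Divergence

section GreenIdentity

open InnerProductSpace Laplacian

lemma spaceLaplacian_eq_laplacian {N : ℕ} {f : EuclideanSpace ℝ (Fin N) → ℝ}
    {x : EuclideanSpace ℝ (Fin N)} (h : DifferentiableAt ℝ (fderiv ℝ f) x) :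
    spaceLaplacian f x = Δ f x := by
  rw [laplacian_eq_iteratedFDeriv_orthonormalBasis f (EuclideanSpace.basisFun (Fin N) ℝ),
    spaceLaplacian]
  refine Finset.sum_congr rfl fun i _ => ?_
  rw [iteratedFDeriv_two_apply, (h.hasFDerivAt.clm_apply (hasFDerivAt_const _ x)).fderiv]
  simp

variable {E : Type*} [NormedAddCommGroup E] [InnerProductSpace ℝ E] [FiniteDimensional ℝ E]

variable (E) in
/-- The metric contraction of bilinear forms, which maps the Hessian to the Laplacian. -/
noncomputable def contraction : (E →L[ℝ] E →L[ℝ] ℝ) →L[ℝ] ℝ :=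
  ∑ i, .apply ℝ ℝ (stdOrthonormalBasis ℝ E i) ∘L .apply ℝ (E →L[ℝ] ℝ) (stdOrthonormalBasis ℝ E i)

lemma contraction_apply (B : E →L[ℝ] E →L[ℝ] ℝ) :
    contraction E B = ∑ i, B (stdOrthonormalBasis ℝ E i) (stdOrthonormalBasis ℝ E i) := by
  simp [contraction]

lemma contraction_fderiv_fderiv (f : E → ℝ) (x : E) :
    contraction E (fderiv ℝ (fderiv ℝ f) x) = Δ f x := by
  simp [laplacian_eq_iteratedFDeriv_stdOrthonormalBasis, contraction_apply,
    iteratedFDeriv_two_apply]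

lemma contraction_smulRight (φ ψ : E →L[ℝ] ℝ) :
    contraction E (φ.smulRight ψ) = φ ((toDual ℝ E).symm ψ) := by
  conv_rhs => rw [← (stdOrthonormalBasis ℝ E).sum_repr' ((toDual ℝ E).symm ψ)]
  simp only [contraction_apply, ContinuousLinearMap.smulRight_apply, smul_eq_mul, map_sum, map_smul]
  refine Finset.sum_congr rfl fun i _ => ?_
  rw [real_inner_comm, toDual_symm_apply, mul_comm]
  rfl

lemma fderiv_apply_gradient (f : E → ℝ) (x : E) :
    fderiv ℝ f x (gradient f x) = ‖fderiv ℝ f x‖ ^ 2 := by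
  rw [gradient, ← toDual_symm_apply, real_inner_self_eq_norm_sq, LinearIsometryEquiv.norm_map]

lemma continuousOn_laplacian {X : Type*} [TopologicalSpace X] {f : X → E → ℝ} {g : X → E}
    {S : Set X} (hf : ContinuousOn (fun p => fderiv ℝ (fderiv ℝ (f p)) (g p)) S) :
    ContinuousOn (fun p => Δ (f p) (g p)) S :=
  ((contraction E).continuous.comp_continuousOn hf).congr fun _ _ =>
    (contraction_fderiv_fderiv _ _).symm

/-- Functions that are twice continuously differentiable up to the boundary of `Ω` and satisfy the
homogeneous Neumann condition there. The normal direction is that of the gradient of `η`, which is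
meant to be a defining function of `Ω`. -/
structure IsC2Neumann (Ω : Set E) (η f : E → ℝ) : Prop where
  differentiableAt : ∀ x ∈ closure Ω, DifferentiableAt ℝ f x
  differentiableAt_fderiv : ∀ x ∈ closure Ω, DifferentiableAt ℝ (fderiv ℝ f) x
  continuousOn_fderiv_fderiv : ContinuousOn (fderiv ℝ (fderiv ℝ f)) (closure Ω)
  neumann : ∀ x ∈ frontier Ω, ⟪gradient f x, gradient η x⟫ = 0

variable {Ω : Set E} {η f w : E → ℝ}

lemma IsC2Neumann.continuousOn (hf : IsC2Neumann Ω η f) : ContinuousOn f (closure Ω) :=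
  fun x hx => (hf.differentiableAt x hx).continuousAt.continuousWithinAt

lemma IsC2Neumann.continuousOn_fderiv (hf : IsC2Neumann Ω η f) :
    ContinuousOn (fderiv ℝ f) (closure Ω) :=
  fun x hx => (hf.differentiableAt_fderiv x hx).continuousAt.continuousWithinAt

lemma IsC2Neumann.continuousOn_laplacian (hf : IsC2Neumann Ω η f) :
    ContinuousOn (fun x => Δ f x) (closure Ω) :=
  NeumannHeat.continuousOn_laplacian hf.continuousOn_fderiv_fderiv

lemma IsC2Neumann.contDiffOn (hf : IsC2Neumann Ω η f) (hΩ : IsOpen Ω) : ContDiffOn ℝ 1 f Ω :=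
  fun _ hx => (contDiffAt_one_iff.mpr ⟨fderiv ℝ f, Ω, hΩ.mem_nhds hx,
    hf.continuousOn_fderiv.mono subset_closure,
    fun y hy => (hf.differentiableAt y (subset_closure hy)).hasFDerivAt⟩).contDiffWithinAt

lemma continuousOn_fderiv_of_bilinear {X F G H : Type*} [NormedAddCommGroup X] [NormedSpace ℝ X]
    [NormedAddCommGroup F] [NormedSpace ℝ F] [NormedAddCommGroup G] [NormedSpace ℝ G]
    [NormedAddCommGroup H] [NormedSpace ℝ H] (B : F →L[ℝ] G →L[ℝ] H) {S : Set X} {u : X → F}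
    {v : X → G} (hu : ∀ x ∈ S, DifferentiableAt ℝ u x) (hu' : ContinuousOn (fderiv ℝ u) S)
    (hv : ∀ x ∈ S, DifferentiableAt ℝ v x) (hv' : ContinuousOn (fderiv ℝ v) S) :
    ContinuousOn (fderiv ℝ fun x => B (u x) (v x)) S := by
  have huc : ContinuousOn u S := fun x hx => (hu x hx).continuousAt.continuousWithinAt
  have hvc : ContinuousOn v S := fun x hx => (hv x hx).continuousAt.continuousWithinAt
  refine ContinuousOn.congr ?_ fun x hx => B.fderiv_of_bilinear (hu x hx) (hv x hx)
  exact (((B.precompR X).continuous.comp_continuousOn huc).clm_apply hv').add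
    (((B.precompL X).continuous.comp_continuousOn hu').clm_apply hvc)

lemma IsDefiningFunction.fderiv_gradient_isBigO (hη : IsDefiningFunction η Ω) (hΩ : IsOpen Ω)
    (hΩb : Bornology.IsBounded Ω) (hηC : ContDiff ℝ 2 η) (hf : IsC2Neumann Ω η f) :
    (fun x => fderiv ℝ η x (gradient f x)) =O[𝓟 Ω] η := by
  have hdη : ContDiff ℝ 1 (fderiv ℝ η) := hηC.fderiv_right (by norm_num)
  let B : (E →L[ℝ] ℝ) →L[ℝ] (E →L[ℝ] ℝ) →L[ℝ] ℝ :=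
    .compL ℝ _ _ _ (contraction E) ∘L .smulRightL ℝ E (E →L[ℝ] ℝ)
  have hB (x : E) : B (fderiv ℝ η x) (fderiv ℝ f x) = fderiv ℝ η x (gradient f x) :=
    contraction_smulRight _ _
  have hdη' : ∀ x ∈ closure Ω, DifferentiableAt ℝ (fderiv ℝ η) x := fun x _ =>
    hdη.differentiable one_ne_zero x
  simp only [← hB]
  refine hη.isBigO_of_eq_zero_on_frontier hΩ hΩb (hηC.of_le one_le_two)
    (fun x hx => (B.hasFDerivAt_of_bilinear (hdη' x hx).hasFDerivAt
      (hf.differentiableAt_fderiv x hx).hasFDerivAt).differentiableAt)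
    (continuousOn_fderiv_of_bilinear B hdη' (hdη.continuous_fderiv one_ne_zero).continuousOn
      hf.differentiableAt_fderiv hf.continuousOn_fderiv_fderiv)
    fun x hx => ?_
  rw [hB, ← hf.neumann x hx, real_inner_comm, gradient, gradient, toDual_symm_apply]

variable [MeasurableSpace E] [BorelSpace E] {μ : Measure E} [μ.IsAddHaarMeasure]

theorem IsDefiningFunction.setIntegral_mul_laplacian (hη : IsDefiningFunction η Ω)
    (hΩ : IsOpen Ω) (hΩb : Bornology.IsBounded Ω) (hηC : ContDiff ℝ 2 η) (hf : IsC2Neumann Ω η f)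
    (hw : ∀ x ∈ closure Ω, DifferentiableAt ℝ w x) (hwc : ContinuousOn (fderiv ℝ w) (closure Ω)) :
    ∫ x in Ω, w x * Δ f x ∂μ = -∫ x in Ω, fderiv ℝ w x (gradient f x) ∂μ := by
  have hw0 : ContinuousOn w (closure Ω) := fun x hx => (hw x hx).continuousAt.continuousWithinAt
  have hflux : (fun x => contraction E ((fderiv ℝ η x).smulRight (w x • fderiv ℝ f x)))
      =O[𝓟 Ω] η := by
    obtain ⟨M, hM⟩ := hΩb.isCompact_closure.exists_bound_of_continuousOn hw0
    have hwO : w =O[𝓟 Ω] fun _ => (1 : ℝ) := IsBigO.of_bound M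
      (eventually_principal.mpr fun x hx => by simpa using hM x (subset_closure hx))
    simpa [contraction_smulRight, gradient] using
      hwO.mul (hη.fderiv_gradient_isBigO hΩ hΩb hηC hf)
  have hV' : ContinuousOn (fderiv ℝ (w • fderiv ℝ f)) (closure Ω) :=
    continuousOn_fderiv_of_bilinear (ContinuousLinearMap.lsmul ℝ ℝ) hw hwc
      hf.differentiableAt_fderiv hf.continuousOn_fderiv_fderiv
  have htrace : ∀ x ∈ Ω, contraction E (fderiv ℝ (w • fderiv ℝ f) x)
      = w x * Δ f x + fderiv ℝ w x (gradient f x) := fun x hx => by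
    rw [fderiv_smul (hw x (subset_closure hx)) (hf.differentiableAt_fderiv x (subset_closure hx)),
      map_add, map_smul, contraction_fderiv_fderiv, contraction_smulRight, smul_eq_mul, gradient]
  have hdiv := setIntegral_clm_fderiv_eq_zero (μ := μ) (contraction E) hΩ hΩb
    (hηC.of_le one_le_two) (fun x hx => (hη.pos x hx).ne') hη.eq_zero
    (fun x hx => ((hw x (subset_closure hx)).smul
      (hf.differentiableAt_fderiv x (subset_closure hx))).hasFDerivAt)
    (hw0.smul hf.continuousOn_fderiv) hV' hflux
  have hgradc : ContinuousOn (gradient f) (closure Ω) :=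
    (toDual ℝ E).symm.continuous.comp_continuousOn hf.continuousOn_fderiv
  have hint : IntegrableOn (fun x => w x * Δ f x) Ω μ :=
    integrableOn_of_continuousOn_closure hΩb (hw0.mul hf.continuousOn_laplacian)
  have hint' : IntegrableOn (fun x => fderiv ℝ w x (gradient f x)) Ω μ :=
    integrableOn_of_continuousOn_closure hΩb (hwc.clm_apply hgradc)
  rw [setIntegral_congr_fun hΩ.measurableSet htrace, integral_add hint hint'] at hdiv
  exact eq_neg_of_add_eq_zero_left hdiv

lemma IsC2Neumann.setIntegral_laplacian (hf : IsC2Neumann Ω η f) (hη : IsDefiningFunction η Ω)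
    (hΩ : IsOpen Ω) (hΩb : Bornology.IsBounded Ω) (hηC : ContDiff ℝ 2 η) :
    ∫ x in Ω, Δ f x ∂μ = 0 := by
  simpa using hη.setIntegral_mul_laplacian (μ := μ) (w := fun _ => 1) hΩ hΩb hηC hf
    (fun _ _ => differentiableAt_const 1)
    (contDiff_const.continuous_fderiv one_ne_zero).continuousOn

lemma IsC2Neumann.setIntegral_mul_laplacian_self (hf : IsC2Neumann Ω η f)
    (hη : IsDefiningFunction η Ω) (hΩ : IsOpen Ω) (hΩb : Bornology.IsBounded Ω)
    (hηC : ContDiff ℝ 2 η) :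
    ∫ x in Ω, f x * Δ f x ∂μ = -∫ x in Ω, ‖fderiv ℝ f x‖ ^ 2 ∂μ := by
  simpa only [fderiv_apply_gradient] using hη.setIntegral_mul_laplacian (μ := μ) hΩ hΩb hηC hf
    hf.differentiableAt hf.continuousOn_fderiv

end GreenIdentity

section Decay

lemma hasDerivAt_exp_mul (A t : ℝ) : HasDerivAt (fun t => exp (A * t)) (exp (A * t) * A) t := by
  simpa using ((hasDerivAt_id t).const_mul A).exp

lemma monotoneOn_exp_mul {F F' : ℝ → ℝ} {A a b : ℝ} (hFc : ContinuousOn F (Icc a b))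
    (hF : ∀ t ∈ Ioo a b, HasDerivAt F (F' t) t) (hF' : ∀ t ∈ Ioo a b, -(A * F t) ≤ F' t) :
    MonotoneOn (fun t => exp (A * t) * F t) (Icc a b) := by
  refine monotoneOn_of_hasDerivWithinAt_nonneg
    (f' := fun t => exp (A * t) * A * F t + exp (A * t) * F' t) (convex_Icc a b)
    (ContinuousOn.mul (by fun_prop) hFc) ?_ ?_ <;> rw [interior_Icc] <;> intro t ht
  · exact ((hasDerivAt_exp_mul A t).mul (hF t ht)).hasDerivWithinAt
  · rw [mul_assoc, ← mul_add]
    exact mul_nonneg (exp_pos _).le (by linarith [hF' t ht])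

lemma mul_pow_mul_le_of_nash {n : ℕ} {s c m κ g d : ℝ} (hs : 0 < s) (hc : 0 < c)
    (hκ : κ = 2 / (c * (n + 1))) (h : g ≤ c * (κ * s * d + (1 + ((κ * s) ^ n)⁻¹) * m)) :
    (n + 1) * s ^ n * g ≤ 2 * s ^ (n + 1) * d + (n + 1) * c * (s ^ n + (κ ^ n)⁻¹) * m := by
  refine (mul_le_mul_of_nonneg_left h (by positivity)).trans_eq ?_
  rw [mul_pow, hκ]
  field_simp
  ring

-- Taking `σ` proportional to `T - t` in `hnash` bounds `d/dt ((T - t) ^ (n + 1) * g t)` from below.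
lemma le_of_two_mul_le_deriv_of_nash {n : ℕ} {T c m κ : ℝ} (hT : 0 < T) (hc : 0 < c) (hm : 0 ≤ m)
    (hκ : κ = 2 / (c * (n + 1))) {g g' d : ℝ → ℝ} (hgc : ContinuousOn g (Icc 0 T))
    (hg : ∀ t ∈ Ioo 0 T, HasDerivAt g (g' t) t) (hg' : ∀ t ∈ Ioo 0 T, 2 * d t ≤ g' t)
    (hnash : ∀ σ > 0, ∀ t ∈ Ioo 0 T, g t ≤ c * (σ * d t + (1 + (σ ^ n)⁻¹) * m)) :
    g 0 ≤ (n + 1) * c * (1 + ((κ * T) ^ n)⁻¹) * m := by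
  have hκ0 : 0 < κ := by rw [hκ]; positivity
  set R := (n + 1) * c * (T ^ n + (κ ^ n)⁻¹) * m with hR
  have hderiv : ∀ t ∈ Ioo 0 T, HasDerivAt (fun t => (T - t) ^ (n + 1) * g t)
      (-((n + 1) * (T - t) ^ n) * g t + (T - t) ^ (n + 1) * g' t) t := by
    intro t ht
    refine HasDerivAt.mul ?_ (hg t ht)
    simpa using ((hasDerivAt_id t).const_sub T).fun_pow (n + 1)
  have hlower : ∀ t ∈ Ioo 0 T,
      -R ≤ -((n + 1) * (T - t) ^ n) * g t + (T - t) ^ (n + 1) * g' t := by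
    intro t ht
    have hs : 0 < T - t := sub_pos.mpr ht.2
    have hg_le := mul_pow_mul_le_of_nash hs hc hκ (hnash (κ * (T - t)) (by positivity) t ht)
    have hR_le : (n + 1) * c * ((T - t) ^ n + (κ ^ n)⁻¹) * m ≤ R := by
      rw [hR]
      gcongr
      linarith [ht.1]
    have := mul_le_mul_of_nonneg_left (hg' t ht) (pow_pos hs (n + 1)).le
    linarith
  have hmean := (convex_Icc 0 T).mul_sub_le_image_sub_of_le_deriv
    (f := fun t => (T - t) ^ (n + 1) * g t) (ContinuousOn.mul (by fun_prop) hgc)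
    (by rw [interior_Icc]; exact fun t ht => (hderiv t ht).differentiableAt.differentiableWithinAt)
    (by rw [interior_Icc]; exact fun t ht => (hderiv t ht).deriv ▸ hlower t ht)
    0 (left_mem_Icc.mpr hT.le) T (right_mem_Icc.mpr hT.le) hT.le
  have hscale : T ^ (n + 1) * ((n + 1) * c * (1 + ((κ * T) ^ n)⁻¹) * m) = R * T := by
    rw [hR, mul_pow]
    field_simp
    ring
  refine le_of_mul_le_mul_left ?_ (pow_pos hT (n + 1))
  simp only [sub_self, sub_zero, ne_eq, Nat.succ_ne_zero, not_false_eq_true, zero_pow,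
    zero_mul] at hmean
  linarith

lemma le_of_growth_of_nash {n : ℕ} {T c κ A : ℝ} (hT : 0 < T) (hc : 0 < c)
    (hκ : κ = 2 / (c * (n + 1))) {F F' G G' D : ℝ → ℝ}
    (hF0 : ∀ t ∈ Icc 0 T, 0 ≤ F t) (hFc : ContinuousOn F (Icc 0 T))
    (hF : ∀ t ∈ Ioo 0 T, HasDerivAt F (F' t) t) (hF' : ∀ t ∈ Ioo 0 T, -(A * F t) ≤ F' t)
    (hGc : ContinuousOn G (Icc 0 T)) (hG : ∀ t ∈ Ioo 0 T, HasDerivAt G (G' t) t)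
    (hG' : ∀ t ∈ Ioo 0 T, 2 * D t - 2 * A * G t ≤ G' t)
    (hnash : ∀ σ > 0, ∀ t ∈ Ioo 0 T, G t ≤ c * (σ * D t + (1 + (σ ^ n)⁻¹) * F t ^ 2)) :
    G 0 ≤ (n + 1) * c * (1 + ((κ * T) ^ n)⁻¹) * (exp (A * T) * F T) ^ 2 := by
  have hF_le : ∀ t ∈ Icc 0 T, exp (A * t) * F t ≤ exp (A * T) * F T := fun t ht =>
    monotoneOn_exp_mul hFc hF hF' ht (right_mem_Icc.mpr hT.le) ht.2
  have hexp (t : ℝ) : exp (2 * A * t) = exp (A * t) ^ 2 := by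
    rw [← exp_nat_mul]
    congr 1
    push_cast
    ring
  have hmain := le_of_two_mul_le_deriv_of_nash hT hc (sq_nonneg (exp (A * T) * F T)) hκ
    (g := fun t => exp (2 * A * t) * G t) (d := fun t => exp (2 * A * t) * D t)
    (ContinuousOn.mul (by fun_prop) hGc)
    (fun t ht => (hasDerivAt_exp_mul (2 * A) t).mul (hG t ht)) (fun t ht => ?_)
    (fun σ hσ t ht => ?_)
  · simpa using hmain
  · have := mul_le_mul_of_nonneg_left (hG' t ht) (exp_pos (2 * A * t)).le
    linarith
  · have ht' := Ioo_subset_Icc_self ht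
    calc exp (2 * A * t) * G t
        ≤ exp (2 * A * t) * (c * (σ * D t + (1 + (σ ^ n)⁻¹) * F t ^ 2)) := by
          gcongr
          exact hnash σ hσ t ht
      _ = c * (σ * (exp (2 * A * t) * D t) + (1 + (σ ^ n)⁻¹) * (exp (A * t) * F t) ^ 2) := by
          rw [hexp]
          ring
      _ ≤ _ := by
          gcongr _ * (_ + _ * ?_ ^ 2)
          · exact mul_nonneg (exp_pos _).le (hF0 t ht')
          · exact hF_le t ht'

lemma exists_mul_one_add_inv_pow_le_exp (n : ℕ) {K κ : ℝ} (hK : 0 < K) (hκ : 0 < κ) :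
    ∃ C > 0, ∀ T > 0, K * (1 + ((κ * T) ^ n)⁻¹) ≤ exp (C * (1 + 1 / T)) := by
  set L := K * (1 + (κ ^ n)⁻¹ * n.factorial) with hL
  refine ⟨1 + L, by positivity, fun T hT => ?_⟩
  have hpow : (1 / T) ^ n ≤ n.factorial * exp (1 / T) := by
    have := pow_div_factorial_le_exp (1 / T) (by positivity) n
    rwa [div_le_iff₀' (by positivity)] at this
  have hone : 1 ≤ exp (1 / T) := one_le_exp (by positivity)
  calc K * (1 + ((κ * T) ^ n)⁻¹) = K * (1 + (κ ^ n)⁻¹ * (1 / T) ^ n) := by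
        rw [mul_pow, mul_inv, one_div, inv_pow]
    _ ≤ K * (exp (1 / T) + (κ ^ n)⁻¹ * (n.factorial * exp (1 / T))) := by gcongr
    _ = L * exp (1 / T) := by rw [hL]; ring
    _ ≤ exp L * exp (1 / T) := by
        gcongr
        linarith [add_one_le_exp L]
    _ = exp (L + 1 / T) := (exp_add _ _).symm
    _ ≤ exp ((1 + L) * (1 + 1 / T)) := by
        have : 0 < L * (1 / T) := by positivity
        gcongr
        linarith

end Decay

section ParametricIntegral

lemma continuousOn_slice {Y Z W : Type*} [TopologicalSpace Y] [TopologicalSpace Z]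
    [TopologicalSpace W] {f : Y × Z → W} {S : Set Y} {U : Set Z} (hf : ContinuousOn f (S ×ˢ U))
    {y : Y} (hy : y ∈ S) : ContinuousOn (fun z => f (y, z)) U :=
  hf.comp (by fun_prop) fun _ hz => ⟨hy, hz⟩

variable {X : Type*} [MetricSpace X] [ProperSpace X] [MeasurableSpace X] [OpensMeasurableSpace X]
  {μ : Measure X} [IsFiniteMeasureOnCompacts μ] {Ω : Set X} {p p' : ℝ × X → ℝ} {I : Set ℝ}

lemma continuousOn_setIntegral_prod (hΩ : MeasurableSet Ω) (hΩb : Bornology.IsBounded Ω)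
    (hI : IsCompact I) (hp : ContinuousOn p (I ×ˢ closure Ω)) :
    ContinuousOn (fun t => ∫ x in Ω, p (t, x) ∂μ) I := by
  obtain ⟨M, hM⟩ := (hI.prod hΩb.isCompact_closure).exists_bound_of_continuousOn hp
  refine continuousOn_of_dominated (bound := fun _ => M) (fun t ht => ?_) (fun t ht => ?_)
    (integrableOn_const hΩb.measure_lt_top.ne) ?_
  · exact (integrableOn_of_continuousOn_closure hΩb (continuousOn_slice hp ht)).aestronglyMeasurable
  · exact ae_restrict_of_forall_mem hΩ fun x hx => hM _ ⟨ht, subset_closure hx⟩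
  · exact ae_restrict_of_forall_mem hΩ fun x hx =>
      hp.comp (by fun_prop) fun t ht => ⟨ht, subset_closure hx⟩

lemma hasDerivAt_setIntegral_prod (hΩ : MeasurableSet Ω) (hΩb : Bornology.IsBounded Ω)
    (hI : IsOpen I) (hp : ContinuousOn p (I ×ˢ closure Ω))
    (hderiv : ∀ t ∈ I, ∀ x ∈ Ω, HasDerivAt (fun s => p (s, x)) (p' (t, x)) t)
    (hp' : ContinuousOn p' (I ×ˢ closure Ω)) {t : ℝ} (ht : t ∈ I) :
    HasDerivAt (fun t => ∫ x in Ω, p (t, x) ∂μ) (∫ x in Ω, p' (t, x) ∂μ) t := by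
  obtain ⟨ε, hε, hball⟩ := Metric.nhds_basis_closedBall.mem_iff.mp (hI.mem_nhds ht)
  obtain ⟨M, hM⟩ := ((isCompact_closedBall t ε).prod
    hΩb.isCompact_closure).exists_bound_of_continuousOn (hp'.mono (prod_mono hball subset_rfl))
  have hint {f : ℝ × X → ℝ} (hf : ContinuousOn f (I ×ˢ closure Ω)) {s : ℝ} (hs : s ∈ I) :
      IntegrableOn (fun x => f (s, x)) Ω μ :=
    integrableOn_of_continuousOn_closure hΩb (continuousOn_slice hf hs)
  refine (hasDerivAt_integral_of_dominated_loc_of_deriv_le (μ := μ.restrict Ω)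
    (F := fun t x => p (t, x)) (F' := fun t x => p' (t, x)) (bound := fun _ => M)
    (Metric.closedBall_mem_nhds t hε) ?_ (hint hp ht) (hint hp' ht).aestronglyMeasurable ?_
    (integrableOn_const hΩb.measure_lt_top.ne) ?_).2
  · filter_upwards [hI.mem_nhds ht] with s hs using (hint hp hs).aestronglyMeasurable
  · exact ae_restrict_of_forall_mem hΩ fun x hx s hs => hM _ ⟨hs, subset_closure hx⟩
  · exact ae_restrict_of_forall_mem hΩ fun x hx s hs => hderiv s (hball hs) x hx

end ParametricIntegral

section EssentialBound

variable {X : Type*} [MeasurableSpace X] {μ : Measure X} {U : Set X}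

lemma le_of_ae_restrict_le_of_continuousOn [TopologicalSpace X]
    [μ.IsOpenPosMeasure] (hU : IsOpen U) {f g : X → ℝ} (hf : ContinuousOn f U)
    (hg : ContinuousOn g U) (h : ∀ᵐ x ∂μ.restrict U, f x ≤ g x) : ∀ x ∈ U, f x ≤ g x := by
  have hmax := Measure.eqOn_open_of_ae_eq (f := f ⊔ g) (g := g)
    (h.mono fun x hx => sup_eq_right.mpr hx) hU (hf.sup hg) hg
  exact fun x hx => sup_eq_right.mp (hmax hx)

lemma ae_norm_le_toReal_eLpNorm_top {F : Type*} [NormedAddCommGroup F] {a : X → F}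
    (ha : eLpNorm a ⊤ μ ≠ ⊤) : ∀ᵐ x ∂μ, ‖a x‖ ≤ (eLpNorm a ⊤ μ).toReal := by
  filter_upwards [ae_le_eLpNormEssSup (f := a) (μ := μ)] with x hx
  rw [← eLpNorm_exponent_top] at hx
  simpa using ENNReal.toReal_mono ha hx

lemma eLpNorm_top_restrict_ne_top {F : Type*} [NormedAddCommGroup F] {a : X → F} {B : ℝ}
    (hU : MeasurableSet U) (ha : ∀ x ∈ U, ‖a x‖ ≤ B) : eLpNorm a ⊤ (μ.restrict U) ≠ ⊤ := by
  rw [eLpNorm_exponent_top]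
  exact (eLpNormEssSup_lt_top_of_ae_bound (ae_restrict_of_forall_mem hU ha)).ne

end EssentialBound

section Subsolutions

open Laplacian

variable {E : Type*} [NormedAddCommGroup E] [InnerProductSpace ℝ E] [FiniteDimensional ℝ E]

/-- Nonnegative functions on `[0, T] × closure Ω`, with time derivative `qt`, that are of class `C¹`
in time and `C²` in space and satisfy the homogeneous Neumann condition at all times in `(0, T)`. -/
structure IsClassicalNeumann (Ω : Set E) (η : E → ℝ) (T : ℝ) (q qt : ℝ × E → ℝ) : Prop where
  continuousOn : ContinuousOn q (Icc 0 T ×ˢ closure Ω)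
  nonneg : ∀ p ∈ Icc 0 T ×ˢ closure Ω, 0 ≤ q p
  hasDerivAt : ∀ p ∈ Ioo 0 T ×ˢ closure Ω, HasDerivAt (fun s => q (s, p.2)) (qt p) p.1
  continuousOn_deriv : ContinuousOn qt (Ioo 0 T ×ˢ closure Ω)
  differentiableAt : ∀ p ∈ Ioo 0 T ×ˢ closure Ω, DifferentiableAt ℝ (fun z => q (p.1, z)) p.2
  differentiableAt_fderiv : ∀ p ∈ Ioo 0 T ×ˢ closure Ω,
    DifferentiableAt ℝ (fderiv ℝ fun z => q (p.1, z)) p.2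
  continuousOn_fderiv_fderiv : ContinuousOn
    (fun p : ℝ × E => fderiv ℝ (fderiv ℝ fun z => q (p.1, z)) p.2) (Ioo 0 T ×ˢ closure Ω)
  neumann : ∀ t ∈ Ioo 0 T, ∀ x ∈ frontier Ω, ⟪gradient (fun z => q (t, z)) x, gradient η x⟫ = 0

namespace IsClassicalNeumann

variable {Ω : Set E} {η : E → ℝ} {T A : ℝ} {q qt : ℝ × E → ℝ}

lemma mono {S : ℝ} (hST : S ≤ T) (hq : IsClassicalNeumann Ω η T q qt) :
    IsClassicalNeumann Ω η S q qt := by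
  have hIcc : Icc 0 S ×ˢ closure Ω ⊆ Icc 0 T ×ˢ closure Ω :=
    prod_mono_left (Icc_subset_Icc_right hST)
  have hIoo : Ioo 0 S ⊆ Ioo 0 T := Ioo_subset_Ioo_right hST
  have hprod : Ioo 0 S ×ˢ closure Ω ⊆ Ioo 0 T ×ˢ closure Ω := prod_mono_left hIoo
  exact
    { continuousOn := hq.continuousOn.mono hIcc
      nonneg := fun p hp => hq.nonneg p (hIcc hp)
      hasDerivAt := fun p hp => hq.hasDerivAt p (hprod hp)
      continuousOn_deriv := hq.continuousOn_deriv.mono hprod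
      differentiableAt := fun p hp => hq.differentiableAt p (hprod hp)
      differentiableAt_fderiv := fun p hp => hq.differentiableAt_fderiv p (hprod hp)
      continuousOn_fderiv_fderiv := hq.continuousOn_fderiv_fderiv.mono hprod
      neumann := fun t ht => hq.neumann t (hIoo ht) }

lemma isC2Neumann (hq : IsClassicalNeumann Ω η T q qt) {t : ℝ} (ht : t ∈ Ioo 0 T) :
    IsC2Neumann Ω η fun z => q (t, z) where
  differentiableAt x hx := hq.differentiableAt (t, x) ⟨ht, hx⟩
  differentiableAt_fderiv x hx := hq.differentiableAt_fderiv (t, x) ⟨ht, hx⟩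
  continuousOn_fderiv_fderiv := continuousOn_slice hq.continuousOn_fderiv_fderiv ht
  neumann := hq.neumann t ht

lemma continuousOn_laplacian (hq : IsClassicalNeumann Ω η T q qt) :
    ContinuousOn (fun p : ℝ × E => Δ (fun z => q (p.1, z)) p.2) (Ioo 0 T ×ˢ closure Ω) :=
  NeumannHeat.continuousOn_laplacian hq.continuousOn_fderiv_fderiv

lemma setIntegral_nonneg [MeasurableSpace E] {μ : Measure E} (hq : IsClassicalNeumann Ω η T q qt)
    (hΩ : MeasurableSet Ω) {t : ℝ} (ht : t ∈ Icc 0 T) : 0 ≤ ∫ x in Ω, q (t, x) ∂μ :=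
  MeasureTheory.setIntegral_nonneg hΩ fun x hx => hq.nonneg (t, x) ⟨ht, subset_closure hx⟩

lemma hasDerivAt_sq (hq : IsClassicalNeumann Ω η T q qt) {p : ℝ × E}
    (hp : p ∈ Ioo 0 T ×ˢ closure Ω) :
    HasDerivAt (fun s => q (s, p.2) ^ 2) (2 * (q p * qt p)) p.1 := by
  simpa [mul_assoc] using (hq.hasDerivAt p hp).fun_pow 2

variable [MeasurableSpace E] [BorelSpace E] {μ : Measure E} [μ.IsAddHaarMeasure]

lemma neg_mul_integral_le_integral_deriv (hq : IsClassicalNeumann Ω η T q qt)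
    (hsub : ∀ t ∈ Ioo 0 T, ∀ x ∈ Ω, -(A * q (t, x)) ≤ qt (t, x) + Δ (fun z => q (t, z)) x)
    (hη : IsDefiningFunction η Ω) (hΩ : IsOpen Ω) (hΩb : Bornology.IsBounded Ω)
    (hηC : ContDiff ℝ 2 η) {t : ℝ} (ht : t ∈ Ioo 0 T) :
    -(A * ∫ x in Ω, q (t, x) ∂μ) ≤ ∫ x in Ω, qt (t, x) ∂μ := by
  have hf := hq.isC2Neumann ht
  have hint : IntegrableOn (fun x => q (t, x)) Ω μ :=
    integrableOn_of_continuousOn_closure hΩb hf.continuousOn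
  have hint_t : IntegrableOn (fun x => qt (t, x)) Ω μ :=
    integrableOn_of_continuousOn_closure hΩb (continuousOn_slice hq.continuousOn_deriv ht)
  have hint_lap : IntegrableOn (fun x => Δ (fun z => q (t, z)) x) Ω μ :=
    integrableOn_of_continuousOn_closure hΩb hf.continuousOn_laplacian
  calc -(A * ∫ x in Ω, q (t, x) ∂μ) = ∫ x in Ω, -(A * q (t, x)) ∂μ := by
        rw [integral_neg, integral_const_mul]
    _ ≤ ∫ x in Ω, (qt (t, x) + Δ (fun z => q (t, z)) x) ∂μ :=
        setIntegral_mono_on (hint.const_mul A).neg (hint_t.add hint_lap) hΩ.measurableSet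
          (hsub t ht)
    _ = ∫ x in Ω, qt (t, x) ∂μ := by
        rw [integral_add hint_t hint_lap, hf.setIntegral_laplacian hη hΩ hΩb hηC, add_zero]

lemma energy_le_integral_deriv_sq (hq : IsClassicalNeumann Ω η T q qt)
    (hsub : ∀ t ∈ Ioo 0 T, ∀ x ∈ Ω, -(A * q (t, x)) ≤ qt (t, x) + Δ (fun z => q (t, z)) x)
    (hη : IsDefiningFunction η Ω) (hΩ : IsOpen Ω) (hΩb : Bornology.IsBounded Ω)
    (hηC : ContDiff ℝ 2 η) {t : ℝ} (ht : t ∈ Ioo 0 T) :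
    2 * ∫ x in Ω, ‖fderiv ℝ (fun z => q (t, z)) x‖ ^ 2 ∂μ - 2 * A * ∫ x in Ω, q (t, x) ^ 2 ∂μ
      ≤ ∫ x in Ω, 2 * (q (t, x) * qt (t, x)) ∂μ := by
  have hf := hq.isC2Neumann ht
  have hint_sq : IntegrableOn (fun x => q (t, x) ^ 2) Ω μ :=
    integrableOn_of_continuousOn_closure hΩb (hf.continuousOn.pow 2)
  have hint_t : IntegrableOn (fun x => q (t, x) * qt (t, x)) Ω μ :=
    integrableOn_of_continuousOn_closure hΩb
      (hf.continuousOn.mul (continuousOn_slice hq.continuousOn_deriv ht))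
  have hint_lap : IntegrableOn (fun x => q (t, x) * Δ (fun z => q (t, z)) x) Ω μ :=
    integrableOn_of_continuousOn_closure hΩb (hf.continuousOn.mul hf.continuousOn_laplacian)
  have hmono : ∫ x in Ω, -(A * q (t, x) ^ 2) ∂μ
      ≤ ∫ x in Ω, (q (t, x) * qt (t, x) + q (t, x) * Δ (fun z => q (t, z)) x) ∂μ := by
    refine setIntegral_mono_on (hint_sq.const_mul A).neg (hint_t.add hint_lap) hΩ.measurableSet
      fun x hx => ?_
    have hpos := hq.nonneg (t, x) ⟨Ioo_subset_Icc_self ht, subset_closure hx⟩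
    linear_combination mul_le_mul_of_nonneg_left (hsub t ht x hx) hpos
  rw [integral_add hint_t hint_lap, hf.setIntegral_mul_laplacian_self hη hΩ hΩb hηC,
    integral_neg, integral_const_mul] at hmono
  rw [integral_const_mul]
  linarith

lemma integral_sq_le_of_nash (hq : IsClassicalNeumann Ω η T q qt)
    (hsub : ∀ t ∈ Ioo 0 T, ∀ x ∈ Ω, -(A * q (t, x)) ≤ qt (t, x) + Δ (fun z => q (t, z)) x)
    (hη : IsDefiningFunction η Ω) (hΩ : IsOpen Ω) (hΩb : Bornology.IsBounded Ω)
    (hηC : ContDiff ℝ 2 η) (hT : 0 < T) {n : ℕ} {c : ℝ} (hc : 0 < c)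
    (hnash : ∀ σ > 0, ∀ u : E → ℝ, ContDiffOn ℝ 1 u Ω → IntegrableOn u Ω μ →
      IntegrableOn (fun x => ‖fderiv ℝ u x‖ ^ 2) Ω μ →
      ∫ x in Ω, u x ^ 2 ∂μ ≤ c * (σ * ∫ x in Ω, ‖fderiv ℝ u x‖ ^ 2 ∂μ
        + (1 + (σ ^ n)⁻¹) * (∫ x in Ω, ‖u x‖ ∂μ) ^ 2)) :
    ∫ x in Ω, q (0, x) ^ 2 ∂μ ≤ (n + 1) * c * (1 + ((2 / (c * (n + 1)) * T) ^ n)⁻¹)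
      * (exp (A * T) * ∫ x in Ω, q (T, x) ∂μ) ^ 2 := by
  have hqc := hq.continuousOn.mono (prod_mono_left Ioo_subset_Icc_self)
  refine le_of_growth_of_nash hT hc rfl
    (F := fun t => ∫ x in Ω, q (t, x) ∂μ) (G := fun t => ∫ x in Ω, q (t, x) ^ 2 ∂μ)
    (fun t ht => hq.setIntegral_nonneg hΩ.measurableSet ht)
    (continuousOn_setIntegral_prod hΩ.measurableSet hΩb isCompact_Icc hq.continuousOn)
    (fun t ht => hasDerivAt_setIntegral_prod hΩ.measurableSet hΩb isOpen_Ioo hqc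
      (fun s hs x hx => hq.hasDerivAt (s, x) ⟨hs, subset_closure hx⟩) hq.continuousOn_deriv ht)
    (fun t ht => hq.neg_mul_integral_le_integral_deriv hsub hη hΩ hΩb hηC ht)
    (continuousOn_setIntegral_prod hΩ.measurableSet hΩb isCompact_Icc (hq.continuousOn.pow 2))
    (fun t ht => hasDerivAt_setIntegral_prod hΩ.measurableSet hΩb isOpen_Ioo (hqc.pow 2)
      (fun s hs x hx => hq.hasDerivAt_sq (p := (s, x)) ⟨hs, subset_closure hx⟩)
      (continuousOn_const.mul (hqc.mul hq.continuousOn_deriv)) ht)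
    (fun t ht => hq.energy_le_integral_deriv_sq hsub hη hΩ hΩb hηC ht) fun σ hσ t ht => ?_
  have hf := hq.isC2Neumann ht
  have hnorm : ∫ x in Ω, ‖q (t, x)‖ ∂μ = ∫ x in Ω, q (t, x) ∂μ :=
    setIntegral_congr_fun hΩ.measurableSet fun x hx =>
      norm_of_nonneg (hq.nonneg (t, x) ⟨Ioo_subset_Icc_self ht, subset_closure hx⟩)
  simpa only [hnorm] using hnash σ hσ (fun x => q (t, x)) (hf.contDiffOn hΩ)
    (integrableOn_of_continuousOn_closure hΩb hf.continuousOn)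
    (integrableOn_of_continuousOn_closure hΩb (hf.continuousOn_fderiv.norm.pow 2))

end IsClassicalNeumann

lemma sqrt_le_exp_mul_of_le {C T A K F G : ℝ} (hC : 0 < C) (hT : 0 < T) (hA : 0 ≤ A) (hF : 0 ≤ F)
    (hK : K ≤ exp (C * (1 + 1 / T))) (hG : G ≤ K * (exp (A * T) * F) ^ 2) :
    √G ≤ exp ((C + 1) * (1 + 1 / T + T * A)) * F := by
  refine sqrt_le_iff.mpr ⟨by positivity, hG.trans ?_⟩
  calc K * (exp (A * T) * F) ^ 2 ≤ exp (C * (1 + 1 / T)) * (exp (A * T) * F) ^ 2 := by gcongr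
    _ = exp (C * (1 + 1 / T) + 2 * (A * T)) * F ^ 2 := by
        rw [exp_add, mul_pow, ← exp_nat_mul, Nat.cast_ofNat, mul_assoc]
    _ ≤ exp (2 * ((C + 1) * (1 + 1 / T + T * A))) * F ^ 2 := by
        have : 0 ≤ C * (1 + 1 / T) + 2 * (1 + 1 / T) + 2 * C * (T * A) := by positivity
        gcongr
        linarith
    _ = (exp ((C + 1) * (1 + 1 / T + T * A)) * F) ^ 2 := by
        rw [mul_pow, ← exp_nat_mul, Nat.cast_ofNat]

theorem IsDefiningFunction.exists_sqrt_integral_sq_le {Ω : Set E} {η : E → ℝ}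
    [MeasurableSpace E] [BorelSpace E] (μ : Measure E) [μ.IsAddHaarMeasure]
    (hη : IsDefiningFunction η Ω) (hΩ : IsOpen Ω) (hΩb : Bornology.IsBounded Ω)
    (hηC : ContDiff ℝ 2 η) :
    ∃ C > 0, ∀ T > 0, ∀ A ≥ 0, ∀ q qt : ℝ × E → ℝ, IsClassicalNeumann Ω η T q qt →
      (∀ t ∈ Ioo 0 T, ∀ x ∈ Ω, -(A * q (t, x)) ≤ qt (t, x) + Δ (fun z => q (t, z)) x) →
      √(∫ x in Ω, q (0, x) ^ 2 ∂μ) ≤ exp (C * (1 + 1 / T + T * A)) * ∫ x in Ω, q (T, x) ∂μ := by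
  obtain ⟨c, hc, hnash⟩ := ((hη.interiorConeCondition hΩ (hηC.of_le one_le_two)).hasNashInequality
    (μ := μ) hΩ hΩb).exists_integral_sq_le
  obtain ⟨C, hC, hconst⟩ := exists_mul_one_add_inv_pow_le_exp (finrank ℝ E)
    (K := (finrank ℝ E + 1) * c) (κ := 2 / (c * (finrank ℝ E + 1))) (by positivity) (by positivity)
  refine ⟨C + 1, by positivity, fun T hT A hA q qt hq hsub => ?_⟩
  have hmass := hq.setIntegral_nonneg (μ := μ) hΩ.measurableSet (right_mem_Icc.mpr hT.le)
  exact sqrt_le_exp_mul_of_le hC hT hA hmass (hconst T hT)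
    (hq.integral_sq_le_of_nash hsub hη hΩ hΩb hηC hT hc hnash)

lemma IsClassicalNeumann.neg_mul_le_of_potential [MeasurableSpace E] [BorelSpace E] {Ω : Set E}
    {η : E → ℝ} {T : ℝ} {a q qt : ℝ × E → ℝ} (hq : IsClassicalNeumann Ω η T q qt) (hΩ : IsOpen Ω)
    {μ : Measure (ℝ × E)} [μ.IsOpenPosMeasure]
    (ha : eLpNorm a ⊤ (μ.restrict (Ioo 0 T ×ˢ Ω)) ≠ ⊤)
    (hsub : ∀ t ∈ Ioo 0 T, ∀ x ∈ Ω,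
      -qt (t, x) - Δ (fun z => q (t, z)) x + a (t, x) * q (t, x) ≤ 0) :
    ∀ p ∈ Ioo 0 T ×ˢ Ω, -((eLpNorm a ⊤ (μ.restrict (Ioo 0 T ×ˢ Ω))).toReal * q p)
      ≤ qt p + Δ (fun z => q (p.1, z)) p.2 := by
  have hprod : Ioo 0 T ×ˢ Ω ⊆ Ioo 0 T ×ˢ closure Ω := prod_mono_right subset_closure
  have hprod' : Ioo 0 T ×ˢ Ω ⊆ Icc 0 T ×ˢ closure Ω := prod_mono Ioo_subset_Icc_self subset_closure
  have hO : IsOpen (Ioo 0 T ×ˢ Ω) := isOpen_Ioo.prod hΩ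
  refine le_of_ae_restrict_le_of_continuousOn (μ := μ) hO
    (continuousOn_const.mul (hq.continuousOn.mono hprod')).neg
    ((hq.continuousOn_deriv.add hq.continuousOn_laplacian).mono hprod) ?_
  filter_upwards [ae_norm_le_toReal_eLpNorm_top ha, ae_restrict_mem hO.measurableSet] with p hp hpO
  have hle := mul_le_mul_of_nonneg_right (neg_le_of_abs_le hp) (hq.nonneg p (hprod' hpO))
  linarith [hsub p.1 hpO.1 p.2 hpO.2]

end Subsolutions

lemma frontier_subset_closure_diff {X : Type*} [TopologicalSpace X] {U V : Set X} (hU : IsOpen U)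
    (h : closure V ⊆ U) : frontier U ⊆ closure (U \ V) := fun x hx => by
  have hsplit : x ∈ closure (U \ V) ∪ closure V := by
    rw [← closure_union, sdiff_union_self]
    exact closure_mono subset_union_left (frontier_subset_closure hx)
  exact hsplit.resolve_right fun hV => (hU.frontier_eq ▸ hx).2 (h hV)

end NeumannHeat

open NeumannHeat

theorem L2_L1_smoothing_estimate_general {E : Type*} [NormedAddCommGroup E] [InnerProductSpace ℝ E]
    [FiniteDimensional ℝ E] [MeasurableSpace E] [BorelSpace E] (μ : Measure E) [μ.IsAddHaarMeasure]
    {Ω : Set E} {η : E → ℝ} (hΩ : IsOpen Ω) (hΩb : Bornology.IsBounded Ω) (hηC : ContDiff ℝ 2 η)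
    (hη : IsDefiningFunction η Ω) :
    ∃ C > 0, ∀ T > 0, ∀ a : ℝ × E → ℝ,
      eLpNorm a ⊤ ((volume.prod μ).restrict (Ioo 0 T ×ˢ Ω)) ≠ ⊤ →
      ∀ q qt : ℝ × E → ℝ, IsClassicalNeumann Ω η T q qt →
      (∀ t ∈ Ioo 0 T, ∀ x ∈ Ω,
        -qt (t, x) - Laplacian.laplacian (fun z => q (t, z)) x + a (t, x) * q (t, x) ≤ 0) →
      √(∫ x in Ω, q (0, x) ^ 2 ∂μ) ≤ exp (C * (1 + 1 / T
        + T * (eLpNorm a ⊤ ((volume.prod μ).restrict (Ioo 0 T ×ˢ Ω))).toReal))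
          * ∫ x in Ω, q (T / 4, x) ∂μ := by
  obtain ⟨C, hC, hbound⟩ := hη.exists_sqrt_integral_sq_le μ hΩ hΩb hηC
  refine ⟨4 * C, by positivity, fun T hT a ha q qt hq hsub => ?_⟩
  set A := (eLpNorm a ⊤ ((volume.prod μ).restrict (Ioo 0 T ×ˢ Ω))).toReal
  have hA0 : 0 ≤ A := ENNReal.toReal_nonneg
  have hq' : IsClassicalNeumann Ω η (T / 4) q qt := hq.mono (by linarith)
  have hmass := hq'.setIntegral_nonneg (μ := μ) hΩ.measurableSet
    (right_mem_Icc.mpr (by positivity : 0 ≤ T / 4))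
  calc √(∫ x in Ω, q (0, x) ^ 2 ∂μ)
      ≤ exp (C * (1 + 1 / (T / 4) + T / 4 * A)) * ∫ x in Ω, q (T / 4, x) ∂μ :=
        hbound (T / 4) (by positivity) A hA0 q qt hq' fun t ht x hx =>
          hq.neg_mul_le_of_potential hΩ ha hsub (t, x) ⟨Ioo_subset_Ioo_right (by linarith) ht, hx⟩
    _ = exp (C * (1 + 4 * (1 / T) + T * A / 4)) * ∫ x in Ω, q (T / 4, x) ∂μ := by
        congr 3
        field_simp
    _ ≤ exp (4 * C * (1 + 1 / T + T * A)) * ∫ x in Ω, q (T / 4, x) ∂μ := by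
        have : 0 ≤ C * (3 + 15 / 4 * (T * A)) := by positivity
        gcongr exp ?_ * _
        linarith

theorem L2_L1_smoothing_estimate
    (N : ℕ) (hN : 1 ≤ N)
    (Ω : Set (EuclideanSpace ℝ (Fin N)))
    (hΩo : IsOpen Ω) (hΩb : Bornology.IsBounded Ω) (hΩc : IsConnected Ω)
    (η : EuclideanSpace ℝ (Fin N) → ℝ) (hη : ContDiff ℝ 2 η)
    (hηpos : ∀ x ∈ Ω, 0 < η x) (hηbd : ∀ x ∈ frontier Ω, η x = 0) :
    ∃ C > (0:ℝ),
      ∀ ω₀ ω : Set (EuclideanSpace ℝ (Fin N)),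
      IsOpen ω₀ → ω₀.Nonempty → IsOpen ω → ω.Nonempty →
      closure ω₀ ⊆ ω → ω ⊆ Ω →
      (∀ x ∈ closure (Ω \ ω₀), 0 < ‖gradient η x‖) →
      ∀ T : ℝ, 0 < T →
      ∀ a : ℝ × EuclideanSpace ℝ (Fin N) → ℝ, Measurable a →
      (∃ B : ℝ, ∀ p ∈ Set.Ioo (0:ℝ) T ×ˢ Ω, |a p| ≤ B) →
      ∀ q qt : ℝ × EuclideanSpace ℝ (Fin N) → ℝ,
        ContinuousOn q (Set.Icc 0 T ×ˢ closure Ω) →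
        (∀ p ∈ Set.Icc 0 T ×ˢ closure Ω, 0 ≤ q p) →
        (∀ p ∈ Set.Ioo 0 T ×ˢ closure Ω,
          HasDerivAt (fun τ => q (τ, p.2)) (qt p) p.1) →
        ContinuousOn qt (Set.Ioo 0 T ×ˢ closure Ω) →
        (∀ p ∈ Set.Ioo 0 T ×ˢ closure Ω,
          DifferentiableAt ℝ (fun z => q (p.1, z)) p.2) →
        (∀ p ∈ Set.Ioo 0 T ×ˢ closure Ω,
          DifferentiableAt ℝ (fun y => fderiv ℝ (fun z => q (p.1, z)) y) p.2) →
        ContinuousOn (fun p : ℝ × EuclideanSpace ℝ (Fin N) =>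
          fderiv ℝ (fun z => q (p.1, z)) p.2) (Set.Ioo 0 T ×ˢ closure Ω) →
        ContinuousOn (fun p : ℝ × EuclideanSpace ℝ (Fin N) =>
          fderiv ℝ (fun y => fderiv ℝ (fun z => q (p.1, z)) y) p.2)
          (Set.Ioo 0 T ×ˢ closure Ω) →
        (∀ t ∈ Set.Ioo (0:ℝ) T, ∀ x ∈ Ω,
          -qt (t, x) - spaceLaplacian (fun z => q (t, z)) x
            + a (t, x) * q (t, x) = 0) →
        (∀ t ∈ Set.Ioo (0:ℝ) T, ∀ x ∈ frontier Ω,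
          ⟪gradient (fun z => q (t, z)) x, gradient η x⟫ = 0) →
        Real.sqrt (∫ x in Ω, q (0, x) ^ 2)
          ≤ Real.exp (C * (1 + 1/T + T * (eLpNorm a ⊤ (volume.restrict (Set.Ioo (0:ℝ) T ×ˢ Ω))).toReal + Real.sqrt (eLpNorm a ⊤ (volume.restrict (Set.Ioo (0:ℝ) T ×ˢ Ω))).toReal)) *
            ∫ x in Ω, q (T/4, x) := by
  by_cases hdef : IsDefiningFunction η Ω
  · obtain ⟨C, hC, hbound⟩ := L2_L1_smoothing_estimate_general volume hΩo hΩb hη hdef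
    refine ⟨C, hC, fun ω₀ ω _ _ _ _ _ _ _ T hT a _ ⟨B, hB⟩ q qt hq hq0 hqt hqtc hd hd' _ hc' heq
      hneu => ?_⟩
    have hclassical : IsClassicalNeumann Ω η T q qt := ⟨hq, hq0, hqt, hqtc, hd, hd', hc', hneu⟩
    have ha : eLpNorm a ⊤ (volume.restrict (Ioo 0 T ×ˢ Ω)) ≠ ⊤ :=
      eLpNorm_top_restrict_ne_top (isOpen_Ioo.prod hΩo).measurableSet hB
    have hmass := hclassical.setIntegral_nonneg (μ := volume) (t := T / 4) hΩo.measurableSet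
      ⟨by positivity, by linarith⟩
    refine (hbound T hT a ha q qt hclassical fun t ht x hx => ?_).trans ?_
    · rw [← spaceLaplacian_eq_laplacian (hd' (t, x) ⟨ht, subset_closure hx⟩)]
      exact (heq t ht x hx).le
    · rw [← Measure.volume_eq_prod]
      gcongr exp (C * ?_) * _
      exact le_add_of_nonneg_right (sqrt_nonneg _)
  · refine ⟨1, one_pos, fun ω₀ ω _ _ _ _ hω₀ hω hreg =>
      (hdef ⟨hηpos, hηbd, fun x hx hfderiv => ?_⟩).elim⟩
    have hpos := hreg x (frontier_subset_closure_diff hΩo (hω₀.trans hω) hx)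
    simp [gradient, hfderiv] at hpos
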